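/- arXiv:1804.05701 — 10 statements merged into one kernel-verified Lean document; each statement's English description precedes it below -/
import Mathlib

section
/- Let A be a commutative unital C*-algebra which is monotone complete, i.e. every nonempty set of selfadjoint elements of A that is bounded above has a least upper bound in the selfadjoint part of A. Let B be a commutative unital C*-algebra, C ⊆ B a unital C*-subalgebra, and φ : C → A a unital *-homomorphism. Then there exists a unital *-homomorphism ψ : B → A extending φ, i.e. ψ(c) = φ(c) for all c ∈ C. -/
/-!
By Gelfand duality the statement is dual to the projectivity of extremally disconnected spaces
among compact Hausdorff spaces (Gleason's theorem).

* The character space of a monotone complete `A` is extremally disconnected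
  (`extremallyDisconnected_characterSpace`): for an open set `U`, the supremum of all continuous
  functions `0 ≤ f ≤ 1` vanishing off `U` equals `1` on `closure U` and `0` elsewhere, by
  Urysohn's lemma, and so `closure U` is open.
* The restriction map from characters of `B` to characters of a closed star subalgebra `C` is
  surjective (`surjective_compContinuousMap`, for any injective homomorphism in place of the
  inclusion): its image is compact, and a nonzero element of `C` whose Gelfand transform vanishes
  on the image would be annihilated by every character of `B`.

The map dual to `φ` therefore lifts through the restriction map, and the lift dualises to `ψ`.
-/

/-- A commutative unital C*-algebra (more generally, a star-ordered algebra) is *monotone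
complete* if every nonempty set of selfadjoint elements which is bounded above has a least
upper bound in the selfadjoint part. -/
def SetMonotoneComplete (A : Type*) [PartialOrder A] [Star A] : Prop :=
  ∀ S : Set A, S.Nonempty → (∀ x ∈ S, IsSelfAdjoint x) → BddAbove S →
    ∃ b : A, IsSelfAdjoint b ∧ b ∈ upperBounds S ∧
      ∀ c ∈ upperBounds S, IsSelfAdjoint c → b ≤ c

open WeakDual WeakDual.CharacterSpace

open scoped ComplexOrder

section ExtremallyDisconnected

variable {A : Type*} [CommCStarAlgebra A]

/-- The element of `A` whose Gelfand transform is the real-valued continuous function `f`. -/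
noncomputable def gelfandOfReal (f : C(characterSpace ℂ A, ℝ)) : A :=
  (gelfandStarTransform A).symm ⟨fun x => (f x : ℂ), by fun_prop⟩

lemma gelfandStarTransform_gelfandOfReal (f : C(characterSpace ℂ A, ℝ)) (x : characterSpace ℂ A) :
    gelfandStarTransform A (gelfandOfReal f) x = (f x : ℂ) := by
  rw [gelfandOfReal, StarAlgEquiv.apply_symm_apply]
  rfl

lemma isSelfAdjoint_gelfandOfReal (f : C(characterSpace ℂ A, ℝ)) :
    IsSelfAdjoint (gelfandOfReal f) := by
  apply (gelfandStarTransform A).injective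
  change gelfandStarTransform A (star (gelfandOfReal f)) = gelfandStarTransform A (gelfandOfReal f)
  rw [map_star]
  ext x
  rw [ContinuousMap.star_apply, gelfandStarTransform_gelfandOfReal]
  exact Complex.conj_ofReal _

lemma le_iff_gelfandStarTransform [PartialOrder A] [StarOrderedRing A] {a b : A} :
    a ≤ b ↔ ∀ x, gelfandStarTransform A a x ≤ gelfandStarTransform A b x := by
  rw [← map_le_map_iff (gelfandStarTransform A), ContinuousMap.le_def]

lemma gelfandOfReal_le_gelfandOfReal [PartialOrder A] [StarOrderedRing A]
    {f g : C(characterSpace ℂ A, ℝ)} :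
    gelfandOfReal f ≤ gelfandOfReal g ↔ ∀ x, f x ≤ g x := by
  rw [le_iff_gelfandStarTransform]
  simp only [gelfandStarTransform_gelfandOfReal, Complex.real_le_real]

theorem extremallyDisconnected_characterSpace [PartialOrder A] [StarOrderedRing A]
    (hA : SetMonotoneComplete A) : ExtremallyDisconnected (characterSpace ℂ A) := by
  refine ⟨fun U hU => ?_⟩
  let F : Set C(characterSpace ℂ A, ℝ) :=
    {f | (∀ x, 0 ≤ f x) ∧ (∀ x, f x ≤ 1) ∧ ∀ x ∉ U, f x = 0}
  -- A function `g` equal to `1` on `U` and nonnegative everywhere dominates `F`.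
  have hbound : ∀ g : C(characterSpace ℂ A, ℝ), (∀ x, 0 ≤ g x) → (∀ x ∈ U, g x = 1) →
      gelfandOfReal g ∈ upperBounds (gelfandOfReal '' F) := by
    rintro g hg0 hg1 _ ⟨f, hf, rfl⟩
    refine gelfandOfReal_le_gelfandOfReal.2 fun x => ?_
    by_cases hx : x ∈ U
    · rw [hg1 x hx]
      exact hf.2.1 x
    · rw [hf.2.2 x hx]
      exact hg0 x
  have hzero : (0 : C(characterSpace ℂ A, ℝ)) ∈ F := by simp [F]
  obtain ⟨b, -, hb, hleast⟩ := hA (gelfandOfReal '' F) ⟨_, 0, hzero, rfl⟩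
    (by rintro _ ⟨f, -, rfl⟩; exact isSelfAdjoint_gelfandOfReal f)
    ⟨gelfandOfReal 1, hbound 1 (by simp) (by simp)⟩
  have hle : ∀ f ∈ F, ∀ x, (f x : ℂ) ≤ gelfandStarTransform A b x := fun f hf x => by
    rw [← gelfandStarTransform_gelfandOfReal]
    exact le_iff_gelfandStarTransform.1 (hb ⟨f, hf, rfl⟩) x
  have hge : ∀ g : C(characterSpace ℂ A, ℝ), (∀ x, 0 ≤ g x) → (∀ x ∈ U, g x = 1) →
      ∀ x, gelfandStarTransform A b x ≤ (g x : ℂ) := fun g hg0 hg1 x => by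
    rw [← gelfandStarTransform_gelfandOfReal]
    exact le_iff_gelfandStarTransform.1
      (hleast _ (hbound g hg0 hg1) (isSelfAdjoint_gelfandOfReal g)) x
  have hb_one : ∀ x ∈ U, gelfandStarTransform A b x = 1 := by
    intro x hx
    apply le_antisymm
    · simpa using hge 1 (by simp) (by simp) x
    · obtain ⟨f, hf0, hf1, hf⟩ := exists_continuous_zero_one_of_isClosed hU.isClosed_compl
        (isClosed_singleton (x := x)) (by simpa using hx)
      have := hle f ⟨fun y => (hf y).1, fun y => (hf y).2, fun y hy => hf0 hy⟩ x
      rwa [hf1 rfl, Pi.one_apply, Complex.ofReal_one] at this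
  have hb_zero : ∀ x ∉ closure U, gelfandStarTransform A b x = 0 := by
    intro x hx
    apply le_antisymm
    · obtain ⟨g, hg0, hg1, hg⟩ := exists_continuous_zero_one_of_isClosed
        (isClosed_singleton (x := x)) (isClosed_closure (s := U)) (by simpa using hx)
      have := hge g (fun y => (hg y).1) (fun y hy => hg1 (subset_closure hy)) x
      rwa [hg0 rfl, Pi.zero_apply, Complex.ofReal_zero] at this
    · simpa using hle 0 hzero x
  have hb_one' : ∀ x ∈ closure U, gelfandStarTransform A b x = 1 :=
    closure_minimal hb_one
      (isClosed_eq (map_continuous (gelfandStarTransform A b)) continuous_const)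
  have hset : closure U = gelfandStarTransform A b ⁻¹' {0}ᶜ := by
    ext x
    by_cases hx : x ∈ closure U
    · simp only [hx, Set.mem_preimage, hb_one' x hx, Set.mem_compl_iff, Set.mem_singleton_iff,
        one_ne_zero, not_false_eq_true]
    · simp only [hx, Set.mem_preimage, hb_zero x hx, Set.mem_compl_iff, Set.mem_singleton_iff,
        not_true_eq_false]
  rw [hset]
  exact isOpen_compl_singleton.preimage (map_continuous (gelfandStarTransform A b))

end ExtremallyDisconnected

/-- Dually to an injective homomorphism, the induced map of character spaces is surjective. -/
theorem surjective_compContinuousMap {C B : Type*} [CommCStarAlgebra C] [CommCStarAlgebra B]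
    (ι : C →⋆ₐ[ℂ] B) (hι : Function.Injective ι) :
    Function.Surjective (compContinuousMap ι) := by
  intro χ
  by_contra hχ
  have hclosed : IsClosed (Set.range (compContinuousMap ι)) :=
    (isCompact_range (map_continuous _)).isClosed
  obtain ⟨f, hf0, hf1, -⟩ := exists_continuous_zero_one_of_isClosed hclosed
    (isClosed_singleton (x := χ)) (Set.disjoint_singleton_right.2 hχ)
  have hzero : ι (gelfandOfReal f) = 0 := by
    apply (gelfandStarTransform B).injective
    change gelfandStarTransform B (ι (gelfandOfReal f)) = gelfandStarTransform B 0
    rw [map_zero]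
    ext x
    change gelfandStarTransform C (gelfandOfReal f) (compContinuousMap ι x) = 0
    rw [gelfandStarTransform_gelfandOfReal, hf0 ⟨x, rfl⟩]
    simp
  have hχ1 := gelfandStarTransform_gelfandOfReal f χ
  rw [hι (hzero.trans (map_zero ι).symm), map_zero, hf1 rfl] at hχ1
  simp at hχ1

/-- Projectivity of extremally disconnected compact Hausdorff spaces, with the three spaces in
arbitrary universes. -/
theorem exists_lift_of_extremallyDisconnected.{u, v, w} {X : Type u} {Y : Type v} {Z : Type w}
    [TopologicalSpace X]
    [TopologicalSpace Y] [TopologicalSpace Z] [CompactSpace X] [T2Space X]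
    [CompactSpace Y] [T2Space Y] [CompactSpace Z] [T2Space Z] [ExtremallyDisconnected X]
    (f : C(X, Z)) (g : C(Y, Z)) (hg : Function.Surjective g) :
    ∃ h : C(X, Y), g.comp h = f := by
  -- The library version needs all three spaces in one universe.
  have : ExtremallyDisconnected (ULift.{max v w} X) :=
    extremallyDisconnected_of_homeo Homeomorph.ulift.symm
  obtain ⟨h, hcont, hh⟩ := CompactT2.ExtremallyDisconnected.projective
    (A := ULift.{max v w} X) (Y := ULift.{max u w} Y) (Z := ULift.{max u v} Z)
    (f := fun x => ULift.up (f x.down)) (g := fun y => ULift.up (g y.down))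
    (by fun_prop) (by fun_prop) (fun z => by
      obtain ⟨y, hy⟩ := hg z.down
      exact ⟨ULift.up y, congrArg ULift.up hy⟩)
  refine ⟨⟨fun x => (h (ULift.up x)).down, by fun_prop⟩, ?_⟩
  ext x
  exact congrArg ULift.down (congrFun hh (ULift.up x))

/-- A monotone complete commutative unital C*-algebra is injective for unital
*-homomorphisms of commutative C*-algebras: any unital *-homomorphism defined on a unital
C*-subalgebra `C` of a commutative unital C*-algebra `B` extends to all of `B`. -/
theorem statement0
    (A : Type*) [CommCStarAlgebra A] [PartialOrder A] [StarOrderedRing A]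
    (hA : SetMonotoneComplete A)
    (B : Type*) [CommCStarAlgebra B]
    (C : StarSubalgebra ℂ B) (hC : IsClosed (C : Set B))
    (φ : C →⋆ₐ[ℂ] A) :
    ∃ ψ : B →⋆ₐ[ℂ] A, ∀ c : C, ψ (c : B) = φ c := by
  have := extremallyDisconnected_characterSpace hA
  obtain ⟨h, hh⟩ := exists_lift_of_extremallyDisconnected (compContinuousMap φ)
    (compContinuousMap C.subtype)
    (surjective_compContinuousMap C.subtype Subtype.val_injective)
  refine ⟨((gelfandStarTransform A).symm : _ →⋆ₐ[ℂ] A).comp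
    ((h.compStarAlgHom' ℂ ℂ).comp (gelfandStarTransform B : B →⋆ₐ[ℂ] _)), fun c => ?_⟩
  apply (gelfandStarTransform A).injective
  change gelfandStarTransform A ((gelfandStarTransform A).symm
    ((gelfandStarTransform B (c : B)).comp h)) = _
  rw [StarAlgEquiv.apply_symm_apply]
  ext x
  -- Both sides are the value at `c` of the character of `C` obtained from `x`.
  exact congrArg (fun χ : characterSpace ℂ C => χ c) (DFunLike.congr_fun hh x)
end

section
/- Let K be a compact Hausdorff space such that the vector lattice C(K, ℝ) of real-valued continuous functions on K is order complete: every nonempty subset of C(K, ℝ) bounded above has a least upper bound in C(K, ℝ). Let Y be a real Banach space equipped with a vector lattice order admitting an element e ∈ Y such that y ≤ e whenever ‖y‖ ≤ 1, let X ⊆ Y be a vector sublattice with e ∈ X, and let φ : X → C(K, ℝ) be a linear map preserving binary suprema, i.e. φ(x ⊔ y) = φ(x) ⊔ φ(y) for all x, y ∈ X. Then there exists a linear map Ψ : Y → C(K, ℝ) preserving binary suprema (and hence binary infima) which extends φ. -/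
/-!
The extension is a minimal element among the sublinear maps `q : Y → C(K, ℝ)` that preserve
binary suprema and lie below `p y = inf {φ x | x ∈ X, y ≤ x}`.

* `p` preserves suprema: if `y ≤ x` and `z ≤ x'` then `y ⊔ z ≤ x ⊔ x'` and
  `φ (x ⊔ x') = φ x ⊔ φ x'`; taking infima over `x` and `x'` and using that `⊔` distributes over
  infima in a lattice-ordered group (`le_sup_of_isGLB`) gives `p (y ⊔ z) ≤ p y ⊔ p z`.
  The infima exist because `‖y‖ • e ∈ X` lies above `y` and `-‖y‖ • e` lies below.
* The same distributivity shows that the infimum of a chain of such maps is again such a map, so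
  Zorn's lemma yields a minimal `q` (`exists_minimal`).
* A minimal `q` is additive: for fixed `y`, the map `z ↦ inf_{t ≥ 0} (q (z + t y) - t q y)` is the
  infimum of a family decreasing in `t`, hence again sublinear and sup-preserving. It lies
  below `q`, so it equals `q`, and its value at `-y` is at most `-q y` (`neg_le_of_minimal`).
* On `X`, `q x ≤ φ x` and `q (-x) ≤ -φ x` force `q = φ`.

All three infima are instances of one construction, `exists_inf`.
-/

section Sublinear

set_option linter.unusedSectionVars false

variable {Y F : Type*} [AddCommGroup Y] [Module ℝ Y] [Lattice Y] [IsOrderedAddMonoid Y]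
  [AddCommGroup F] [Module ℝ F] [Lattice F] [IsOrderedAddMonoid F] [PosSMulMono ℝ F]

/-- Monotone sublinear maps that preserve binary suprema. Homogeneity and preservation of suprema
are recorded as the inequalities that do not follow from the other fields. -/
structure SupSublinear (q : Y → F) : Prop where
  mono : ∀ z w, z ≤ w → q z ≤ q w
  add : ∀ z w, q (z + w) ≤ q z + q w
  smul : ∀ (r : ℝ) z, 0 < r → q (r • z) ≤ r • q z
  sup : ∀ z w, q (z ⊔ w) ≤ q z ⊔ q w

/-- Distributivity of `⊔` over an infimum, from `a ⊔ b - g ⊔ b ≤ a - g` for `g ≤ a`. -/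
theorem le_sup_of_isGLB_left {A : Set F} {g b c : F} (hg : IsGLB A g)
    (h : ∀ a ∈ A, c ≤ a ⊔ b) : c ≤ g ⊔ b := by
  have key : c - g ⊔ b + g ≤ g := by
    refine hg.2 fun a ha => ?_
    have hga : g ≤ a := hg.1 ha
    have h1 : a ⊔ b ≤ (a - g) + g ⊔ b := by
      refine sup_le ?_ ?_
      · calc a = (a - g) + g := by abel
          _ ≤ _ := by gcongr; exact le_sup_left
      · calc b = 0 + b := by abel
          _ ≤ _ := add_le_add (sub_nonneg.2 hga) le_sup_right
    calc c - g ⊔ b + g ≤ ((a - g) + g ⊔ b) - g ⊔ b + g := by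
          gcongr; exact (h a ha).trans h1
      _ = a := by abel
  have : c - g ⊔ b ≤ 0 := by simpa using key
  exact sub_nonpos.1 this

theorem le_sup_of_isGLB {A B : Set F} {g h c : F} (hg : IsGLB A g) (hh : IsGLB B h)
    (H : ∀ a ∈ A, ∀ b ∈ B, c ≤ a ⊔ b) : c ≤ g ⊔ h := by
  refine le_sup_of_isGLB_left hg fun a ha => ?_
  rw [sup_comm]
  refine le_sup_of_isGLB_left hh fun b hb => ?_
  rw [sup_comm]
  exact H a ha b hb

/-- A pointwise infimum `z ↦ inf (A z)` is `SupSublinear` as soon as the sets `A z` satisfy the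
corresponding inequalities up to passing to a smaller element. -/
theorem exists_inf (hF : ∀ S : Set F, S.Nonempty → BddBelow S → ∃ l, IsGLB S l)
    (A : Y → Set F) (hne : ∀ z, (A z).Nonempty) (hbdd : ∀ z, BddBelow (A z))
    (hmono : ∀ z w, z ≤ w → ∀ a ∈ A w, ∃ c ∈ A z, c ≤ a)
    (hadd : ∀ z w, ∀ a ∈ A z, ∀ b ∈ A w, ∃ c ∈ A (z + w), c ≤ a + b)
    (hsmul : ∀ (r : ℝ) z, 0 < r → ∀ a ∈ A z, ∃ c ∈ A (r • z), c ≤ r • a)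
    (hsup : ∀ z w, ∀ a ∈ A z, ∀ b ∈ A w, ∃ c ∈ A (z ⊔ w), c ≤ a ⊔ b) :
    ∃ m : Y → F, (∀ z, IsGLB (A z) (m z)) ∧ SupSublinear m := by
  choose m hm using fun z => hF (A z) (hne z) (hbdd z)
  refine ⟨m, hm, ?_, ?_, ?_, ?_⟩
  · intro z w hzw
    refine (hm w).2 fun a ha => ?_
    obtain ⟨c, hc, hca⟩ := hmono z w hzw a ha
    exact ((hm z).1 hc).trans hca
  · intro z w
    rw [← sub_le_iff_le_add]
    refine (hm z).2 fun a ha => ?_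
    rw [sub_le_iff_le_add, ← sub_le_iff_le_add']
    refine (hm w).2 fun b hb => ?_
    rw [sub_le_iff_le_add']
    obtain ⟨c, hc, hca⟩ := hadd z w a ha b hb
    exact ((hm _).1 hc).trans hca
  · intro r z hr
    have : r⁻¹ • m (r • z) ≤ m z := by
      refine (hm z).2 fun a ha => ?_
      obtain ⟨c, hc, hca⟩ := hsmul r z hr a ha
      have := smul_le_smul_of_nonneg_left (((hm _).1 hc).trans hca) (inv_nonneg.2 hr.le)
      rwa [inv_smul_smul₀ hr.ne'] at this
    have := smul_le_smul_of_nonneg_left this hr.le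
    rwa [smul_inv_smul₀ hr.ne'] at this
  · intro z w
    refine le_sup_of_isGLB (hm z) (hm w) fun a ha b hb => ?_
    obtain ⟨c, hc, hca⟩ := hsup z w a ha b hb
    exact ((hm _).1 hc).trans hca

namespace SupSublinear

variable {q : Y → F}

theorem map_zero (hq : SupSublinear q) : q 0 = 0 := by
  have h1 : 0 ≤ q 0 := by simpa using hq.add 0 0
  have h2 := hq.smul (1 / 2) 0 (by norm_num)
  rw [smul_zero] at h2
  refine le_antisymm ?_ h1
  have h3 := smul_le_smul_of_nonneg_left h2 (zero_le_two (α := ℝ))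
  rw [smul_smul, two_smul] at h3
  norm_num at h3
  exact h3

theorem map_smul (hq : SupSublinear q) {t : ℝ} (ht : 0 ≤ t) (y : Y) : q (t • y) = t • q y := by
  rcases ht.eq_or_lt with rfl | ht
  · simp [hq.map_zero]
  · refine le_antisymm (hq.smul t y ht) ?_
    have h := smul_le_smul_of_nonneg_left (hq.smul t⁻¹ (t • y) (inv_pos.2 ht)) ht.le
    rwa [inv_smul_smul₀ ht.ne', smul_inv_smul₀ ht.ne'] at h

theorem neg_le (hq : SupSublinear q) (y : Y) : -q (-y) ≤ q y := by
  have h := hq.add y (-y)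
  rw [add_neg_cancel, hq.map_zero] at h
  exact neg_le_iff_add_nonneg.2 h

theorem map_sup (hq : SupSublinear q) (z w : Y) : q (z ⊔ w) = q z ⊔ q w :=
  le_antisymm (hq.sup z w) (sup_le (hq.mono _ _ le_sup_left) (hq.mono _ _ le_sup_right))

end SupSublinear

theorem exists_minimal (hF : ∀ S : Set F, S.Nonempty → BddBelow S → ∃ l, IsGLB S l)
    {p : Y → F} (hp : SupSublinear p) :
    ∃ q ≤ p, Minimal (SupSublinear : (Y → F) → Prop) q := by
  suffices H : ∀ c ⊆ {q : (Y → F)ᵒᵈ | SupSublinear (OrderDual.ofDual q)}, IsChain (· ≤ ·) c →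
      ∀ y ∈ c, ∃ ub ∈ {q : (Y → F)ᵒᵈ | SupSublinear (OrderDual.ofDual q)}, ∀ z ∈ c, z ≤ ub by
    obtain ⟨q, hqp, hq⟩ := zorn_le_nonempty₀ (α := (Y → F)ᵒᵈ) _ H (OrderDual.toDual p) hp
    exact ⟨OrderDual.ofDual q, hqp, hq.prop,
      fun r hr hrq => hq.le_of_ge (y := OrderDual.toDual r) hr hrq⟩
  intro c hc hchain q₀ hq₀
  have hdir : ∀ q ∈ c, ∀ r ∈ c, ∃ k ∈ c, OrderDual.ofDual k ≤ OrderDual.ofDual q ∧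
      OrderDual.ofDual k ≤ OrderDual.ofDual r := by
    intro q hq r hr
    rcases hchain.total hq hr with h | h
    · exact ⟨r, hr, h, le_rfl⟩
    · exact ⟨q, hq, le_rfl, h⟩
  refine Exists.elim (exists_inf hF (fun z => {a | ∃ q ∈ c, OrderDual.ofDual q z = a})
    (fun z => ⟨_, q₀, hq₀, rfl⟩) ?_ ?_ ?_ ?_ ?_) ?_
  · intro z
    refine ⟨-OrderDual.ofDual q₀ (-z), ?_⟩
    rintro _ ⟨q, hq, rfl⟩
    obtain ⟨k, hk, hkq, hkq₀⟩ := hdir q hq q₀ hq₀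
    exact ((neg_le_neg (hkq₀ (-z))).trans ((hc hk).neg_le z)).trans (hkq z)
  · rintro z w hzw _ ⟨q, hq, rfl⟩
    exact ⟨_, ⟨q, hq, rfl⟩, (hc hq).mono _ _ hzw⟩
  · rintro z w _ ⟨q, hq, rfl⟩ _ ⟨r, hr, rfl⟩
    obtain ⟨k, hk, hkq, hkr⟩ := hdir q hq r hr
    exact ⟨_, ⟨k, hk, rfl⟩, ((hc hk).add z w).trans (add_le_add (hkq z) (hkr w))⟩
  · rintro t z ht _ ⟨q, hq, rfl⟩
    exact ⟨_, ⟨q, hq, rfl⟩, (hc hq).smul t z ht⟩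
  · rintro z w _ ⟨q, hq, rfl⟩ _ ⟨r, hr, rfl⟩
    obtain ⟨k, hk, hkq, hkr⟩ := hdir q hq r hr
    exact ⟨_, ⟨k, hk, rfl⟩, ((hc hk).sup z w).trans (sup_le_sup (hkq z) (hkr w))⟩
  · rintro m ⟨hm, hms⟩
    exact ⟨OrderDual.toDual m, hms, fun q hq z => (hm z).1 ⟨q, hq, rfl⟩⟩

/-- A minimal `q` is odd, hence linear: it coincides with
`z ↦ inf_{t ≥ 0} (q (z + t • y) - t • q y)`, whose value at `-y` is at most `-q y`. -/
theorem neg_le_of_minimal (hF : ∀ S : Set F, S.Nonempty → BddBelow S → ∃ l, IsGLB S l)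
    {q : Y → F} (hmin : Minimal (SupSublinear : (Y → F) → Prop) q) (y : Y) :
    q (-y) ≤ -q y := by
  have hq := hmin.prop
  -- The family defining the infimum decreases in `t`.
  have hdec : ∀ (z : Y) (s t : ℝ), 0 ≤ t →
      q (z + (s + t) • y) - (s + t) • q y ≤ q (z + s • y) - s • q y := by
    intro z s t ht
    have h := hq.add (z + s • y) (t • y)
    rw [hq.map_smul ht, add_assoc, ← add_smul] at h
    calc q (z + (s + t) • y) - (s + t) • q y
        ≤ (q (z + s • y) + t • q y) - (s + t) • q y := by gcongr
      _ = _ := by rw [add_smul]; abel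
  refine Exists.elim (exists_inf hF
    (fun z => {a | ∃ t : ℝ, 0 ≤ t ∧ q (z + t • y) - t • q y = a})
    (fun z => ⟨_, 0, le_rfl, rfl⟩) ?_ ?_ ?_ ?_ ?_) ?_
  · intro z
    refine ⟨-q (-z), ?_⟩
    rintro _ ⟨t, ht, rfl⟩
    have h := hq.add (z + t • y) (-z)
    rw [show z + t • y + -z = t • y by abel, hq.map_smul ht] at h
    rw [le_sub_iff_add_le, neg_add_le_iff_le_add, add_comm]
    exact h
  · rintro z w hzw _ ⟨t, ht, rfl⟩
    refine ⟨_, ⟨t, ht, rfl⟩, ?_⟩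
    gcongr
    exact hq.mono _ _ (by gcongr)
  · rintro z w _ ⟨s, hs, rfl⟩ _ ⟨t, ht, rfl⟩
    refine ⟨_, ⟨s + t, add_nonneg hs ht, rfl⟩, ?_⟩
    have h := hq.add (z + s • y) (w + t • y)
    calc q (z + w + (s + t) • y) - (s + t) • q y
        = q ((z + s • y) + (w + t • y)) - (s + t) • q y := by
          congr 2; rw [add_smul]; abel
      _ ≤ (q (z + s • y) + q (w + t • y)) - (s + t) • q y := by gcongr
      _ = _ := by rw [add_smul]; abel
  · rintro r z hr _ ⟨t, ht, rfl⟩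
    refine ⟨_, ⟨r * t, mul_nonneg hr.le ht, rfl⟩, ?_⟩
    rw [mul_smul, ← smul_add, hq.map_smul hr.le, smul_sub, mul_smul]
  · rintro z w _ ⟨s, hs, rfl⟩ _ ⟨t, ht, rfl⟩
    refine ⟨_, ⟨s + t, add_nonneg hs ht, rfl⟩, ?_⟩
    rw [sup_add, hq.map_sup, sub_eq_add_neg, sup_add, ← sub_eq_add_neg, ← sub_eq_add_neg]
    refine sup_le_sup (hdec z s t ht) ?_
    rw [add_comm s t]
    exact hdec w t s hs
  · rintro m ⟨hm, hms⟩
    have hmq : m ≤ q := fun z => (hm z).1 ⟨0, le_rfl, by simp⟩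
    refine (hmin.le_of_le hms hmq (-y)).trans ((hm (-y)).1 ⟨1, zero_le_one, ?_⟩)
    simp [hq.map_zero]

theorem exists_linear_le (hF : ∀ S : Set F, S.Nonempty → BddBelow S → ∃ l, IsGLB S l)
    {p : Y → F} (hp : SupSublinear p) :
    ∃ Ψ : Y →ₗ[ℝ] F, (∀ x y, Ψ (x ⊔ y) = Ψ x ⊔ Ψ y) ∧ ∀ y, Ψ y ≤ p y := by
  obtain ⟨q, hqp, hmin⟩ := exists_minimal hF hp
  have hq := hmin.prop
  have hneg : ∀ y, q (-y) = -q y := fun y =>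
    le_antisymm (neg_le_of_minimal hF hmin y) (neg_le.1 (hq.neg_le y))
  have hadd : ∀ x y, q (x + y) = q x + q y := by
    intro x y
    refine le_antisymm (hq.add x y) ?_
    have h := hq.add (x + y) (-y)
    rw [add_neg_cancel_right, hneg, ← sub_eq_add_neg, le_sub_iff_add_le] at h
    exact h
  refine ⟨⟨⟨q, hadd⟩, fun r y => ?_⟩, hq.map_sup, hqp⟩
  change q (r • y) = r • q y
  rcases le_total 0 r with hr | hr
  · exact hq.map_smul hr y
  · have h := hq.map_smul (neg_nonneg.2 hr) y
    rw [neg_smul, hneg, neg_smul] at h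
    exact neg_injective h

end Sublinear

/-- If `K` is a compact Hausdorff space whose lattice `C(K, ℝ)` of real continuous
functions is order complete, then `C(K, ℝ)` is injective for linear lattice maps: any
linear map `φ` preserving binary suprema, defined on a unital vector sublattice `X` of a
real Banach lattice `Y` with strong unit `e`, extends to a linear map on all of `Y`
preserving binary suprema. -/
theorem statement2
    (K : Type*) [TopologicalSpace K] [CompactSpace K] [T2Space K]
    (hK : ∀ S : Set C(K, ℝ), S.Nonempty → BddAbove S → ∃ l, IsLUB S l)
    (Y : Type*) [NormedAddCommGroup Y] [NormedSpace ℝ Y] [CompleteSpace Y] [Lattice Y]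
    (haddY : ∀ a b c : Y, a ≤ b → a + c ≤ b + c)
    (hsmulY : ∀ (r : ℝ) (y : Y), 0 ≤ r → 0 ≤ y → 0 ≤ r • y)
    (e : Y) (he : ∀ y : Y, ‖y‖ ≤ 1 → y ≤ e)
    (X : Submodule ℝ Y)
    (hXsup : ∀ x y : Y, x ∈ X → y ∈ X → x ⊔ y ∈ X)
    (heX : e ∈ X)
    (φ : X →ₗ[ℝ] C(K, ℝ))
    (hφ : ∀ x y : X,
      φ ⟨(x : Y) ⊔ (y : Y), hXsup x y x.property y.property⟩ = φ x ⊔ φ y) :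
    ∃ Ψ : Y →ₗ[ℝ] C(K, ℝ),
      (∀ x y : Y, Ψ (x ⊔ y) = Ψ x ⊔ Ψ y) ∧ ∀ x : X, Ψ (x : Y) = φ x := by
  have : IsOrderedAddMonoid Y :=
    { add_le_add_left := fun a b h c => haddY a b c h }
  have hF : ∀ S : Set C(K, ℝ), S.Nonempty → BddBelow S → ∃ l, IsGLB S l := by
    intro S hS hb
    obtain ⟨l, hl⟩ := hK (-S) hS.neg hb.neg
    exact ⟨-l, by simpa using hl.neg⟩
  have hsmul_le : ∀ (r : ℝ) (y z : Y), 0 ≤ r → y ≤ z → r • y ≤ r • z := by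
    intro r y z hr hyz
    have h := hsmulY r (z - y) hr (sub_nonneg.2 hyz)
    rwa [smul_sub, sub_nonneg] at h
  have hnorm : ∀ y : Y, y ≤ ‖y‖ • e := by
    intro y
    rcases eq_or_ne y 0 with rfl | hy
    · simp
    have hy' : ‖y‖ ≠ 0 := norm_ne_zero_iff.2 hy
    have h := hsmul_le ‖y‖ _ _ (norm_nonneg y)
      (he (‖y‖⁻¹ • y) (by rw [norm_smul, norm_inv, norm_norm, inv_mul_cancel₀ hy']))
    rwa [smul_inv_smul₀ hy'] at h
  have hφmono : ∀ x y : X, (x : Y) ≤ y → φ x ≤ φ y := by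
    intro x y hxy
    have h := hφ x y
    have h' : (⟨(x : Y) ⊔ (y : Y), hXsup x y x.property y.property⟩ : X) = y :=
      Subtype.ext (sup_eq_right.2 hxy)
    rw [h'] at h
    rw [h]
    exact le_sup_left
  refine Exists.elim (exists_inf hF (fun z : Y => {a | ∃ x : X, z ≤ x ∧ φ x = a})
    (fun z => ⟨_, ‖z‖ • ⟨e, heX⟩, hnorm z, rfl⟩) ?_ ?_ ?_ ?_ ?_) ?_
  · intro z
    refine ⟨φ (-(‖z‖ • ⟨e, heX⟩)), ?_⟩
    rintro _ ⟨x, hx, rfl⟩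
    refine hφmono _ _ (le_trans ?_ hx)
    have h := hnorm (-z)
    rw [norm_neg] at h
    exact neg_le.1 h
  · rintro z w hzw _ ⟨x, hx, rfl⟩
    exact ⟨_, ⟨x, hzw.trans hx, rfl⟩, le_rfl⟩
  · rintro z w _ ⟨x, hx, rfl⟩ _ ⟨y, hy, rfl⟩
    exact ⟨_, ⟨x + y, add_le_add hx hy, rfl⟩, (map_add φ x y).le⟩
  · rintro r z hr _ ⟨x, hx, rfl⟩
    exact ⟨_, ⟨r • x, hsmul_le r _ _ hr.le hx, rfl⟩, (map_smul φ r x).le⟩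
  · rintro z w _ ⟨x, hx, rfl⟩ _ ⟨y, hy, rfl⟩
    exact ⟨_, ⟨_, sup_le_sup hx hy, rfl⟩, (hφ x y).le⟩
  · rintro p ⟨hp, hps⟩
    obtain ⟨Ψ, hΨ, hle⟩ := exists_linear_le hF hps
    have hΨφ : ∀ x : X, Ψ x ≤ φ x := fun x => (hle x).trans ((hp x).1 ⟨x, le_rfl, rfl⟩)
    refine ⟨Ψ, hΨ, fun x => le_antisymm (hΨφ x) ?_⟩
    have h := hΨφ (-x)
    rw [Submodule.coe_neg, map_neg, map_neg] at h
    exact neg_le_neg_iff.1 h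
end

section
/- Let L be a real Banach space with a distinguished closed convex cone L₊ satisfying L₊ ∩ (−L₊) = {0} and L = L₊ − L₊ (an ordered real Banach space), which is preunital: there is e ∈ L₊ such that x ≤ e for every x ∈ L with ‖x‖ ≤ 1, and order complete: every nonempty subset of L bounded above has a least upper bound in L. Let Y be a real normed space with a distinguished convex cone Y₊ defining its order, let X ⊆ Y be a linear subspace with the induced order, and suppose there is u ∈ X such that y ≤ u for every y ∈ Y with ‖y‖ ≤ 1. Then every positive linear map φ : X → L (i.e. φ maps elements of X ∩ Y₊ into L₊) admits a positive linear extension ψ : Y → L. -/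
/-!
This is the M. Riesz extension theorem with values in an order complete ordered space `L`.
Since `u ∈ X` dominates the unit ball of `Y`, every `y : Y` satisfies `x + y ∈ Q` for some `x ∈ X`
(a multiple of `u`). Hence, for a positive map `f` on a subspace containing `X` and a vector `y`
outside that subspace, the set of values `f x` with `x ≤ -y` is nonempty and bounded above (by any
`f x` with `-y ≤ x`); sending `y` to the negative of its least upper bound gives a positive
extension of `f` to one more dimension (`OrderedExtension.step`). Zorn's lemma
(`OrderedExtension.exists_top`) then produces a positive extension to all of `Y`.
-/

namespace OrderedExtension

open Submodule

variable {L : Type*} [AddCommGroup L] [Module ℝ L] {P : Set L}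
  {Y : Type*} [AddCommGroup Y] [Module ℝ Y] {Q : Set Y}

/-- One-dimensional extension: a positive partial map whose domain is cofinal for the order of `Q`
and is not everything has a strictly larger positive extension. -/
theorem step
    (hPsmul : ∀ (c : ℝ), 0 ≤ c → ∀ x ∈ P, c • x ∈ P)
    (hcomplete : ∀ S : Set L, S.Nonempty → (∃ u : L, ∀ x ∈ S, u - x ∈ P) →
      ∃ l : L, (∀ x ∈ S, l - x ∈ P) ∧ ∀ u : L, (∀ x ∈ S, u - x ∈ P) → u - l ∈ P)
    (hQadd : ∀ x ∈ Q, ∀ y ∈ Q, x + y ∈ Q)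
    (hQsmul : ∀ (c : ℝ), 0 ≤ c → ∀ x ∈ Q, c • x ∈ Q)
    (f : Y →ₗ.[ℝ] L) (hf : ∀ x : f.domain, (x : Y) ∈ Q → f x ∈ P)
    (hcofinal : ∀ y, ∃ x : f.domain, (x : Y) + y ∈ Q) (hdom : f.domain ≠ ⊤) :
    ∃ g, f < g ∧ ∀ x : g.domain, (x : Y) ∈ Q → g x ∈ P := by
  obtain ⟨y, -, hy⟩ : ∃ y ∈ ⊤, y ∉ f.domain := SetLike.exists_of_lt (lt_top_iff_ne_top.2 hdom)
  obtain ⟨c, le_c, c_le⟩ :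
      ∃ c, (∀ x : f.domain, -(x : Y) - y ∈ Q → c - f x ∈ P) ∧
        ∀ x : f.domain, (x : Y) + y ∈ Q → f x - c ∈ P := by
    have key : ∀ xp : f.domain, (xp : Y) + y ∈ Q → ∀ a ∈ f '' {x : f.domain | -(x : Y) - y ∈ Q},
        f xp - a ∈ P := by
      rintro xp hxp _ ⟨xn, hxn, rfl⟩
      rw [← f.map_sub]
      apply hf
      have := hQadd _ hxp _ hxn
      rwa [add_assoc, add_sub_cancel, ← sub_eq_add_neg, ← AddSubgroupClass.coe_sub] at this
    obtain ⟨xp, hxp⟩ := hcofinal y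
    obtain ⟨xn, hxn⟩ := hcofinal (-y)
    obtain ⟨c, hc, hc'⟩ := hcomplete (f '' {x : f.domain | -(x : Y) - y ∈ Q})
      ⟨_, -xn, by simpa [sub_eq_add_neg] using hxn, rfl⟩ ⟨_, key xp hxp⟩
    exact ⟨c, fun x hx ↦ hc _ ⟨x, hx, rfl⟩, fun x hx ↦ hc' _ (key x hx)⟩
  refine ⟨f.supSpanSingleton y (-c) hy, ?_, ?_⟩
  · refine lt_iff_le_not_ge.2 ⟨f.left_le_sup _ _, fun H => ?_⟩
    replace H := LinearPMap.domain_mono.monotone H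
    rw [LinearPMap.domain_supSpanSingleton, sup_le_iff, span_le, Set.singleton_subset_iff] at H
    exact hy H.2
  · rintro ⟨z, hz⟩ hzs
    rcases mem_sup.1 hz with ⟨x, hx, y', hy', rfl⟩
    rcases mem_span_singleton.1 hy' with ⟨r, rfl⟩
    simp only at hzs
    rw [LinearPMap.supSpanSingleton_apply_mk _ _ _ _ _ hx, smul_neg, ← sub_eq_add_neg]
    -- For `r ≠ 0`, rescaling by `|r|⁻¹` reduces positivity of `f x - r • c` to the choice of `c`.
    rcases lt_trichotomy r 0 with (hr | hr | hr)
    · have h1 : -(r⁻¹ • x) - y ∈ Q := by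
        have := hQsmul (-r⁻¹) (by simpa using hr.le) _ hzs
        rwa [smul_add, smul_smul, neg_mul, inv_mul_cancel₀ hr.ne, neg_smul, neg_smul, one_smul,
          ← sub_eq_add_neg] at this
      have h2 := hPsmul (-r) (by linarith) _ (le_c (r⁻¹ • ⟨x, hx⟩) h1)
      rw [f.map_smul, smul_sub, smul_smul, neg_mul, mul_inv_cancel₀ hr.ne, neg_smul, neg_smul,
        one_smul, sub_neg_eq_add, neg_add_eq_sub] at h2
      exact h2
    · subst r
      simp only [zero_smul, add_zero, sub_zero, RingHom.id_apply] at hzs ⊢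
      exact hf ⟨x, hx⟩ hzs
    · have h1 : r⁻¹ • x + y ∈ Q := by
        have := hQsmul r⁻¹ (by simpa using hr.le) _ hzs
        rwa [smul_add, smul_smul, inv_mul_cancel₀ hr.ne', one_smul] at this
      have h2 := hPsmul r hr.le _ (c_le (r⁻¹ • ⟨x, hx⟩) h1)
      rw [f.map_smul, smul_sub, smul_smul, mul_inv_cancel₀ hr.ne', one_smul] at h2
      exact h2

theorem exists_top
    (hPsmul : ∀ (c : ℝ), 0 ≤ c → ∀ x ∈ P, c • x ∈ P)
    (hcomplete : ∀ S : Set L, S.Nonempty → (∃ u : L, ∀ x ∈ S, u - x ∈ P) →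
      ∃ l : L, (∀ x ∈ S, l - x ∈ P) ∧ ∀ u : L, (∀ x ∈ S, u - x ∈ P) → u - l ∈ P)
    (hQadd : ∀ x ∈ Q, ∀ y ∈ Q, x + y ∈ Q)
    (hQsmul : ∀ (c : ℝ), 0 ≤ c → ∀ x ∈ Q, c • x ∈ Q)
    (p : Y →ₗ.[ℝ] L) (hp : ∀ x : p.domain, (x : Y) ∈ Q → p x ∈ P)
    (hcofinal : ∀ y, ∃ x : p.domain, (x : Y) + y ∈ Q) :
    ∃ q ≥ p, q.domain = ⊤ ∧ ∀ x : q.domain, (x : Y) ∈ Q → q x ∈ P := by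
  set S := { p : Y →ₗ.[ℝ] L | ∀ x : p.domain, (x : Y) ∈ Q → p x ∈ P }
  have hSc : ∀ c, c ⊆ S → IsChain (· ≤ ·) c → ∀ y ∈ c, ∃ ub ∈ S, ∀ z ∈ c, z ≤ ub := by
    intro c hcs c_chain y hy
    have cne : c.Nonempty := ⟨y, hy⟩
    have hcd : DirectedOn (· ≤ ·) c := c_chain.directedOn
    refine ⟨LinearPMap.sSup c hcd, ?_, fun _ ↦ LinearPMap.le_sSup hcd⟩
    rintro ⟨x, hx⟩ hxs
    have hdir : DirectedOn (· ≤ ·) (LinearPMap.domain '' c) :=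
      directedOn_image.2 (hcd.mono LinearPMap.domain_mono.monotone)
    rcases (mem_sSup_of_directed (cne.image _) hdir).1 hx with ⟨_, ⟨f, hfc, rfl⟩, hfx⟩
    have hle : f ≤ LinearPMap.sSup c hcd := LinearPMap.le_sSup _ hfc
    have heq : f ⟨x, hfx⟩ = LinearPMap.sSup c hcd ⟨x, hx⟩ := hle.2 rfl
    rw [← heq]
    exact hcs hfc ⟨x, hfx⟩ hxs
  obtain ⟨q, hpq, hqs, hq⟩ := zorn_le_nonempty₀ S hSc p hp
  refine ⟨q, hpq, ?_, hqs⟩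
  contrapose! hq
  have hqd : ∀ y, ∃ x : q.domain, (x : Y) + y ∈ Q := fun y ↦
    let ⟨x, hx⟩ := hcofinal y
    ⟨Submodule.inclusion hpq.left x, hx⟩
  rcases step hPsmul hcomplete hQadd hQsmul q hqs hqd hq with ⟨r, hqr, hr⟩
  exact ⟨r, hr, hqr.le, fun hrq ↦ hqr.ne' <| hrq.antisymm hqr.le⟩

end OrderedExtension

/-- A preunital order complete ordered real Banach space `L` (with order given by a closed
convex, proper, generating cone `P`) is injective for positive linear maps of preunital
ordered normed spaces: any positive linear map `φ : X → L` defined on a subspace `X` of an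
ordered normed space `Y`, where `X` contains an element `u` dominating the unit ball of
`Y`, extends to a positive linear map `ψ : Y → L`. Here `x ≤ y` means `y - x` lies in the
distinguished cone. -/
theorem statement3
    (L : Type*) [NormedAddCommGroup L] [NormedSpace ℝ L] [CompleteSpace L]
    (P : Set L) (hPclosed : IsClosed P)
    (hPadd : ∀ x ∈ P, ∀ y ∈ P, x + y ∈ P)
    (hPsmul : ∀ (c : ℝ), 0 ≤ c → ∀ x ∈ P, c • x ∈ P)
    (hPproper : ∀ x ∈ P, -x ∈ P → x = 0)
    (hPgen : ∀ x : L, ∃ a ∈ P, ∃ b ∈ P, x = a - b)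
    (e : L) (heP : e ∈ P) (he : ∀ x : L, ‖x‖ ≤ 1 → e - x ∈ P)
    (hcomplete : ∀ S : Set L, S.Nonempty → (∃ u : L, ∀ x ∈ S, u - x ∈ P) →
      ∃ l : L, (∀ x ∈ S, l - x ∈ P) ∧ ∀ u : L, (∀ x ∈ S, u - x ∈ P) → u - l ∈ P)
    (Y : Type*) [NormedAddCommGroup Y] [NormedSpace ℝ Y]
    (Q : Set Y)
    (hQadd : ∀ x ∈ Q, ∀ y ∈ Q, x + y ∈ Q)
    (hQsmul : ∀ (c : ℝ), 0 ≤ c → ∀ x ∈ Q, c • x ∈ Q)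
    (X : Submodule ℝ Y)
    (u : Y) (huX : u ∈ X) (hu : ∀ y : Y, ‖y‖ ≤ 1 → u - y ∈ Q)
    (φ : X →ₗ[ℝ] L) (hφ : ∀ x : X, (x : Y) ∈ Q → φ x ∈ P) :
    ∃ ψ : Y →ₗ[ℝ] L, (∀ y ∈ Q, ψ y ∈ P) ∧ ∀ x : X, ψ (x : Y) = φ x := by
  have hcofinal : ∀ y : Y, ∃ x : X, (x : Y) + y ∈ Q := by
    intro y
    -- The factor `‖y‖ + 1` is positive, so `y = 0` needs no separate treatment.
    have hc : 0 < ‖y‖ + 1 := by positivity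
    refine ⟨⟨(‖y‖ + 1) • u, X.smul_mem _ huX⟩, ?_⟩
    have h1 : ‖-((‖y‖ + 1)⁻¹ • y)‖ ≤ 1 := by
      rw [norm_neg, norm_smul, norm_inv, Real.norm_of_nonneg hc.le, inv_mul_le_one₀ hc]
      linarith
    have h2 := hQsmul _ hc.le _ (hu _ h1)
    rwa [sub_neg_eq_add, smul_add, smul_smul, mul_inv_cancel₀ hc.ne', one_smul] at h2
  obtain ⟨⟨g_dom, g⟩, ⟨-, hfg⟩, rfl : g_dom = ⊤, hg⟩ :=
    OrderedExtension.exists_top hPsmul hcomplete hQadd hQsmul ⟨X, φ⟩ hφ hcofinal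
  refine ⟨g.comp (LinearMap.id.codRestrict ⊤ fun _ ↦ trivial), ?_, ?_⟩
  · exact fun y hy ↦ hg ⟨y, trivial⟩ hy
  · exact fun x ↦ (hfg rfl).symm
end

section
/- Let A be a commutative unital C*-algebra which is monotone complete, i.e. every nonempty set of selfadjoint elements of A that is bounded above has a least upper bound in the selfadjoint part of A, and let q : A → B be a surjective *-homomorphism onto a C*-algebra B. Then every projection of B lifts to a projection of A: for every e ∈ B with e = e* = e² there exists f ∈ A with f = f* = f² and q(f) = e. -/
theorem exists_projection_between {A : Type*} [CommCStarAlgebra A] [PartialOrder A]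
    [StarOrderedRing A] (hA : SetMonotoneComplete A) {b c : A} (hb0 : 0 ≤ b) (hb1 : b ≤ 1)
    (hc1 : c ≤ 1) (hbc : b * c = 0) :
    ∃ f : A, star f = f ∧ f * f = f ∧ b ≤ f ∧ f ≤ 1 - c := by
  -- a product of positive elements is positive, by commutativity
  have hmul : ∀ x y : A, 0 ≤ x → 0 ≤ y → 0 ≤ x * y := fun x y hx hy =>
    (Commute.all x y).mul_nonneg hx hy
  have hle : ∀ x : A, 0 ≤ x → x ≤ 1 → x * c = 0 → x ≤ 1 - c := by
    intro x _ hx1 hxc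
    have h := hmul _ _ (sub_nonneg.2 hx1) (sub_nonneg.2 hc1)
    rw [← sub_nonneg]
    have h2 : (1 - x) * (1 - c) = 1 - c - x + x * c := by ring
    rwa [h2, hxc, add_zero] at h
  obtain ⟨f, hfs, hfu, hfl⟩ := hA {x | 0 ≤ x ∧ x ≤ 1 ∧ x * c = 0} ⟨b, hb0, hb1, hbc⟩
    (fun x hx => hx.1.isSelfAdjoint) ⟨1, fun x hx => hx.2.1⟩
  have hbf : b ≤ f := hfu ⟨hb0, hb1, hbc⟩
  have hf0 : 0 ≤ f := hb0.trans hbf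
  have hf1 : f ≤ 1 := hfl 1 (fun x hx => hx.2.1) (.one A)
  refine ⟨f, hfs, le_antisymm ?_ ?_, hbf, ?_⟩
  · have h := hmul _ _ hf0 (sub_nonneg.2 hf1)
    rwa [mul_sub, mul_one, sub_nonneg] at h
  · refine hfl _ ?_ (hmul f f hf0 hf0).isSelfAdjoint
    -- each `x` in the set is the square of a member `r ≤ f` of the set
    rintro x ⟨hx0, hx1, hxc⟩
    obtain ⟨r, hr0, hr1, rfl⟩ : ∃ r : A, 0 ≤ r ∧ r ≤ 1 ∧ r * r = x := by
      refine ⟨CFC.sqrt x, CFC.sqrt_nonneg x, ?_, CFC.sqrt_mul_sqrt_self x⟩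
      simpa using CFC.sqrt_le_sqrt x 1 hx1
    have hrc : r * c = 0 := by
      rw [← CStarRing.star_mul_self_eq_zero_iff, star_mul, hr0.isSelfAdjoint.star_eq]
      linear_combination star c * hxc
    have hrf : r ≤ f := hfu ⟨hr0, hr1, hrc⟩
    have h := hmul _ _ (sub_nonneg.2 hrf) (add_nonneg hf0 hr0)
    rw [← sub_nonneg]
    convert h using 1
    ring
  · refine hfl _ (fun x hx => hle x hx.1 hx.2.1 hx.2.2) ?_
    simpa using (sub_nonneg.2 hc1).isSelfAdjoint

theorem exists_orthogonal_lifts {A B : Type*} [CommCStarAlgebra A] [PartialOrder A]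
    [StarOrderedRing A] [CStarAlgebra B] (q : A →⋆ₐ[ℂ] B) (hq : Function.Surjective q)
    (e : B) (he : star e = e ∧ e * e = e) :
    ∃ b c : A, 0 ≤ b ∧ b ≤ 1 ∧ c ≤ 1 ∧ b * c = 0 ∧ q b = e ∧ q c = 1 - e := by
  have hes : IsSelfAdjoint e := he.1
  obtain ⟨a, ha, hqa⟩ : ∃ a : A, IsSelfAdjoint a ∧ q a = e := by
    obtain ⟨a, rfl⟩ := hq e
    refine ⟨realPart a, (realPart a).2, ?_⟩
    rw [realPart_apply_coe, ← Complex.coe_smul, map_smul, map_add, map_star, he.1, ← two_smul ℂ,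
      smul_smul]
    norm_num
  have hcont : Continuous q :=
    AddMonoidHomClass.continuous_of_bound q 1 fun x => by
      simpa using NonUnitalStarAlgHom.norm_apply_le q x
  have hmap : ∀ g : ℝ → ℝ, Continuous g → q (cfc g a) = cfc g e := fun g hg => by
    rw [StarAlgHom.map_cfc q g a hg.continuousOn hcont ha (hqa ▸ hes), hqa]
  have hspec : spectrum ℝ e ⊆ {0, 1} := IsIdempotentElem.spectrum_subset ℝ he.2
  refine ⟨cfc (fun t : ℝ => min 1 (max 0 (2 * t - 1))) a,
    cfc (fun t : ℝ => min 1 (max 0 (1 - 2 * t))) a, ?_, ?_, ?_, ?_, ?_, ?_⟩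
  · exact cfc_nonneg fun t _ => le_min zero_le_one (le_max_left _ _)
  · exact cfc_le_one _ _ fun t _ => min_le_left _ _
  · exact cfc_le_one _ _ fun t _ => min_le_left _ _
  · rw [← cfc_mul _ _ a (by fun_prop) (by fun_prop)]
    rw [← cfc_const_zero ℝ a]
    refine cfc_congr fun t _ => ?_
    rcases le_total (2 * t) 1 with h | h
    · simp [max_eq_left (sub_nonpos.2 h)]
    · simp [max_eq_left (sub_nonpos.2 h)]
  · rw [hmap _ (by fun_prop)]
    conv_rhs => rw [← cfc_id ℝ e]
    refine cfc_congr fun t ht => ?_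
    rcases hspec ht with rfl | rfl <;> norm_num
  · rw [hmap _ (by fun_prop)]
    conv_rhs => rw [← cfc_id ℝ e, ← cfc_const_one ℝ e, ← cfc_sub _ _ e]
    refine cfc_congr fun t ht => ?_
    rcases hspec ht with rfl | rfl <;> norm_num

/-- Projections lift along surjective *-homomorphisms out of monotone complete commutative
unital C*-algebras: if `q : A → B` is a surjective *-homomorphism and `e ∈ B` is a
projection, there is a projection `f ∈ A` with `q f = e`. -/
theorem statement8
    (A : Type*) [CommCStarAlgebra A] [PartialOrder A] [StarOrderedRing A]
    (hA : SetMonotoneComplete A)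
    (B : Type*) [CStarAlgebra B]
    (q : A →⋆ₐ[ℂ] B) (hq : Function.Surjective q)
    (e : B) (he : star e = e ∧ e * e = e) :
    ∃ f : A, star f = f ∧ f * f = f ∧ q f = e := by
  let : PartialOrder B := CStarAlgebra.spectralOrder B
  have : StarOrderedRing B := CStarAlgebra.spectralOrderedRing B
  obtain ⟨b, c, hb0, hb1, hc1, hbc, hqb, hqc⟩ := exists_orthogonal_lifts q hq e he
  obtain ⟨f, hfs, hff, hbf, hfc⟩ := exists_projection_between hA hb0 hb1 hc1 hbc
  refine ⟨f, hfs, hff, le_antisymm ?_ ?_⟩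
  · have h := OrderHomClass.mono q hfc
    simpa [hqc] using h
  · have h := OrderHomClass.mono q hbf
    simpa [hqb] using h
end

section
/- Let A be a unital C*-algebra which is monotone complete (every increasing net of selfadjoint elements bounded above has a least upper bound in the selfadjoint part of A) and in which every maximal commutative *-subalgebra is monotone complete (an AΣ-algebra), and let q : A → B be a surjective *-homomorphism onto a unital C*-algebra B. Then B is a P-algebra: for every selfadjoint x ∈ B and every ε > 0 there exist a commutative C*-subalgebra C ⊆ B containing x and finite real linear combinations y and z of projections of C such that y ≤ x ≤ z, ‖x − y‖ ≤ ε and ‖z − x‖ ≤ ε. -/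
/-!
Lift `x` to a selfadjoint `a : A` and put `a` into a maximal commutative *-subalgebra `M`, which by
maximality is its own commutant (`exists_masa`).

Every real level `t` has a spectral projection `p ∈ M` of `a`, meaning `p (a - t) p ≥ 0` and
`(1 - p) (a - t) (1 - p) ≤ 0` (`exists_spectral_projection`). It is the supremum in `M` of the
increasing sequence `h ^ (1 / 2 ^ n)`, where `h` is a small multiple of the positive part of
`a - t`; the supremum is idempotent because each term of the sequence is the square of the next.

If `0 ≤ a ≤ r`, then cutting at `t = r / 2` gives `0 ≤ a - (r / 2) p ≤ r / 2`. Iterating this binary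
expansion approximates `a` from below by real combinations of projections of `M`, with error at
most any prescribed `ε > 0` (`exists_approx_below`). Applying this to `-a` approximates `a` from
above. Since `q` preserves order and is contractive, both approximations pass to the closure of
`q(M)`, a commutative C*-subalgebra of `B` containing `x`.
-/

/-- A unital C*-algebra is *monotone complete* if every increasing net of selfadjoint
elements which is bounded above has a least upper bound in the selfadjoint part. -/
def NetMonotoneComplete (A : Type*) [PartialOrder A] [Star A] : Prop :=
  ∀ (ι : Type) [Preorder ι], Nonempty ι → IsDirected ι (· ≤ ·) →
    ∀ f : ι → A, Monotone f → (∀ i, IsSelfAdjoint (f i)) → BddAbove (Set.range f) →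
      ∃ b : A, IsSelfAdjoint b ∧ (∀ i, f i ≤ b) ∧
        ∀ c : A, IsSelfAdjoint c → (∀ i, f i ≤ c) → b ≤ c

section MasaApproximation

variable {A : Type*} [CStarAlgebra A]

/-- Every selfadjoint element lies in a commutative *-subalgebra that contains its own
commutant. Such a *-subalgebra is maximal commutative. -/
lemma exists_masa (a : A) (ha : IsSelfAdjoint a) :
    ∃ C : StarSubalgebra ℂ A, a ∈ C ∧ (∀ x ∈ C, ∀ y ∈ C, x * y = y * x) ∧
      ∀ c : A, (∀ y ∈ C, c * y = y * c) → c ∈ C := by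
  -- `C` is the commutant of a maximal commuting set `m` of selfadjoint elements.
  obtain ⟨m, ham, hm⟩ := zorn_subset_nonempty
    {S : Set A | (∀ s ∈ S, IsSelfAdjoint s) ∧ ∀ s ∈ S, ∀ t ∈ S, s * t = t * s}
    (by
      intro c hc hchain _
      refine ⟨⋃₀ c, ⟨?_, ?_⟩, fun s hs => Set.subset_sUnion_of_mem hs⟩
      · rintro s ⟨S, hS, hs⟩
        exact (hc hS).1 s hs
      · rintro s ⟨S, hS, hs⟩ t ⟨T, hT, ht⟩
        rcases hchain.total hS hT with h | h
        · exact (hc hT).2 s (h hs) t ht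
        · exact (hc hS).2 s hs t (h ht))
    {a} (by
      refine ⟨?_, ?_⟩
      · rintro s rfl
        exact ha
      · rintro s rfl t rfl
        rfl)
  have hmC : ∀ z, z ∈ StarSubalgebra.centralizer ℂ m ↔ ∀ g ∈ m, g * z = z * g := by
    intro z
    rw [StarSubalgebra.mem_centralizer_iff]
    refine forall₂_congr fun g hg => ?_
    rw [(hm.prop.1 g hg).star_eq, and_self]
  have hsa : ∀ z ∈ StarSubalgebra.centralizer ℂ m, IsSelfAdjoint z → z ∈ m := by
    intro z hz hzs
    rw [hmC] at hz
    refine hm.le_of_ge (y := insert z m) ⟨?_, ?_⟩ (Set.subset_insert z m) (Set.mem_insert z m)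
    · rintro s (rfl | hs)
      · exact hzs
      · exact hm.prop.1 s hs
    · rintro s (rfl | hs) t (rfl | ht)
      · rfl
      · exact (hz t ht).symm
      · exact hz s hs
      · exact hm.prop.2 s hs t ht
  have hsub : ∀ g ∈ m, g ∈ StarSubalgebra.centralizer ℂ m := by
    intro g hg
    rw [hmC]
    exact fun k hk => hm.prop.2 k hk g hg
  refine ⟨StarSubalgebra.centralizer ℂ m, hsub a (ham rfl), ?_, ?_⟩
  · intro x hx y hy
    -- The real and imaginary parts of `x` belong to `m`, hence commute with `y`.
    have hre : (realPart x : A) ∈ m := by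
      refine hsa _ ?_ (realPart x).2
      rw [realPart_apply_coe, ← Complex.coe_smul]
      exact SMulMemClass.smul_mem _ (add_mem hx (star_mem hx))
    have him : (imaginaryPart x : A) ∈ m := by
      refine hsa _ ?_ (imaginaryPart x).2
      rw [imaginaryPart_apply_coe, ← Complex.coe_smul]
      exact SMulMemClass.smul_mem _ (SMulMemClass.smul_mem _ (sub_mem hx (star_mem hx)))
    rw [hmC] at hy
    rw [← realPart_add_I_smul_imaginaryPart x, add_mul, mul_add, hy _ hre, smul_mul_assoc,
      mul_smul_comm, hy _ him]
  · intro c hc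
    rw [hmC]
    exact fun g hg => (hc g (hsub g hg)).symm

variable [PartialOrder A] [StarOrderedRing A]

/-- In a commutative *-subalgebra, the supremum `b` of a sequence of positive contractions, each
the square of the next, is idempotent: `b * b ≤ b` since `0 ≤ b ≤ 1`, and `b * b` is an upper bound
of the sequence. -/
lemma sup_idempotent {C : StarSubalgebra ℂ A} (hcomm : ∀ x ∈ C, ∀ y ∈ C, x * y = y * x)
    {f : ℕ → A} (hfC : ∀ n, f n ∈ C) (hf0 : ∀ n, 0 ≤ f n) (hf1 : ∀ n, f n ≤ 1)
    (hsq : ∀ n, f (n + 1) * f (n + 1) = f n) {b : A} (hbC : b ∈ C) (hb : IsSelfAdjoint b)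
    (hfb : ∀ n, f n ≤ b)
    (hleast : ∀ c ∈ C, IsSelfAdjoint c → (∀ n, f n ≤ c) → b ≤ c) : b * b = b := by
  have hb0 : 0 ≤ b := (hf0 0).trans (hfb 0)
  have hb1 : b ≤ 1 := hleast 1 (one_mem C) (.one A) hf1
  apply le_antisymm
  · have h : 0 ≤ b * (1 - b) :=
      Commute.mul_nonneg hb0 (sub_nonneg.2 hb1) ((Commute.one_right b).sub_right (.refl b))
    rwa [mul_sub, mul_one, sub_nonneg] at h
  · refine hleast _ (mul_mem hbC hbC) ?_ fun n => ?_
    · rw [IsSelfAdjoint, star_mul, hb.star_eq]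
    · have hc : Commute b (f (n + 1)) := hcomm _ hbC _ (hfC _)
      have h : 0 ≤ (b - f (n + 1)) * (b + f (n + 1)) :=
        Commute.mul_nonneg (sub_nonneg.2 (hfb _)) (add_nonneg hb0 (hf0 _))
          (((Commute.refl b).add_right hc).sub_left (hc.symm.add_right (.refl _)))
      have e : (b - f (n + 1)) * (b + f (n + 1)) = b * b - f n := by
        rw [← hsq n, sub_mul, mul_add, mul_add, hc.eq]
        abel
      rwa [e, sub_nonneg] at h

/-- Spectral projections exist in a commutative *-subalgebra that contains its own commutant and in
which bounded increasing sequences of selfadjoint elements have suprema: `p` plays the role of the indicator of `{a > t}`. -/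
lemma exists_spectral_projection {C : StarSubalgebra ℂ A}
    (hcomm : ∀ x ∈ C, ∀ y ∈ C, x * y = y * x)
    (hmax : ∀ c : A, (∀ y ∈ C, c * y = y * c) → c ∈ C)
    (hsup : ∀ f : ℕ → A, (∀ i, f i ∈ C) → Monotone f → (∀ i, IsSelfAdjoint (f i)) →
      (∃ u ∈ C, ∀ i, f i ≤ u) → ∃ b ∈ C, IsSelfAdjoint b ∧ (∀ i, f i ≤ b) ∧
        ∀ c ∈ C, IsSelfAdjoint c → (∀ i, f i ≤ c) → b ≤ c)
    {a : A} (haC : a ∈ C) (ha : IsSelfAdjoint a) (t : ℝ) :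
    ∃ p ∈ C, IsSelfAdjoint p ∧ p * p = p ∧ 0 ≤ p * (a - algebraMap ℝ A t) * p ∧
      (1 - p) * (a - algebraMap ℝ A t) * (1 - p) ≤ 0 := by
  have hcfcC : ∀ g : ℝ → ℝ, cfc g a ∈ C := fun g =>
    hmax _ fun y hy => (ha.commute_cfc (hcomm a haC y hy) g).eq
  -- The scaling `K` keeps `(s - t) / K` in `[-1, 1]` for `s` in the spectrum of `a`.
  obtain ⟨K, hK0, hK⟩ : ∃ K : ℝ, 0 < K ∧ ∀ s ∈ spectrum ℝ a, |s - t| ≤ K := by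
    refine ⟨‖a‖ * ‖(1 : A)‖ + |t| + 1, by positivity, fun s hs => ?_⟩
    have h1 : ‖s‖ ≤ ‖a‖ * ‖(1 : A)‖ := spectrum.norm_le_norm_mul_of_mem hs
    rw [Real.norm_eq_abs] at h1
    linarith [abs_sub s t]
  -- `h` and `k` are the truncated positive and negative parts of `(s - t) / K`.
  set h : ℝ → ℝ := fun s => max 0 (min 1 ((s - t) / K)) with hh
  set k : ℝ → ℝ := fun s => max 0 (min 1 ((t - s) / K)) with hk
  have hh0 : ∀ s, 0 ≤ h s := fun s => le_max_left _ _
  have hh1 : ∀ s, h s ≤ 1 := fun s => max_le zero_le_one (min_le_left _ _)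
  have hhc : Continuous h := by fun_prop
  have hkc : Continuous k := by fun_prop
  set e : ℕ → ℝ := fun n => (1 / 2 : ℝ) ^ n with he
  have he0 : ∀ n, 0 < e n := fun n => by positivity
  set F : ℕ → ℝ → ℝ := fun n s => h s ^ e n with hF
  have hFc : ∀ n, Continuous (F n) := fun n => hhc.rpow_const fun _ => Or.inr (he0 n).le
  have hF0 : ∀ n s, 0 ≤ F n s := fun n s => Real.rpow_nonneg (hh0 s) _
  have hF1 : ∀ n s, F n s ≤ 1 := fun n s => Real.rpow_le_one (hh0 s) (hh1 s) (he0 n).le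
  have hFsq : ∀ n s, F (n + 1) s * F (n + 1) s = F n s := by
    intro n s
    simp only [hF]
    rw [← Real.rpow_add_of_nonneg (hh0 s) (he0 _).le (he0 _).le]
    congr 1
    simp only [he, pow_succ]
    ring
  have hFmono : ∀ s, Monotone fun n => F n s := fun s => monotone_nat_of_le_succ fun n => by
    rw [← hFsq n s]
    exact mul_le_of_le_one_left (hF0 _ _) (hF1 _ _)
  have hFk : ∀ n s, F n s ≤ 1 - k s := by
    intro n s
    rcases le_total s t with hst | hst
    · have h0 : h s = 0 := max_eq_left
        ((min_le_right _ _).trans (div_nonpos_of_nonpos_of_nonneg (sub_nonpos.2 hst) hK0.le))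
      have hk1 : k s ≤ 1 := max_le zero_le_one (min_le_left _ _)
      simp only [hF, h0, Real.zero_rpow (he0 n).ne']
      linarith
    · have h0 : k s = 0 := max_eq_left
        ((min_le_right _ _).trans (div_nonpos_of_nonpos_of_nonneg (sub_nonpos.2 hst) hK0.le))
      rw [h0, sub_zero]
      exact hF1 n s
  have hmonoc : ∀ {g₁ g₂ : ℝ → ℝ}, Continuous g₁ → Continuous g₂ →
      (∀ s ∈ spectrum ℝ a, g₁ s ≤ g₂ s) → cfc g₁ a ≤ cfc g₂ a := fun h₁ h₂ h₁₂ =>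
    cfc_mono h₁₂ h₁.continuousOn h₂.continuousOn
  have hf0 : ∀ n, 0 ≤ cfc (F n) a := fun n => cfc_nonneg fun s _ => hF0 n s
  have hf1 : ∀ n, cfc (F n) a ≤ 1 := fun n => cfc_le_one _ _ fun s _ => hF1 n s
  obtain ⟨p, hpC, hp, hfp, hleast⟩ := hsup (fun n => cfc (F n) a) (fun n => hcfcC _)
    (fun i j hij => hmonoc (hFc i) (hFc j) fun s _ => hFmono s hij)
    (fun n => cfc_predicate _ _) ⟨1, one_mem C, hf1⟩
  have hpp : p * p = p := sup_idempotent hcomm (fun n => hcfcC _) hf0 hf1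
    (fun n => by
      rw [← cfc_mul _ _ _ (hFc _).continuousOn (hFc _).continuousOn]
      simp only [hFsq]) hpC hp hfp hleast
  have hpk : p ≤ 1 - cfc k a := by
    refine hleast _ (sub_mem (one_mem C) (hcfcC _)) ((IsSelfAdjoint.one A).sub
      (cfc_predicate _ _)) fun n => ?_
    have h1 : cfc (fun s => 1 - k s) a = 1 - cfc k a := by
      rw [cfc_sub (fun _ => (1 : ℝ)) k a (by fun_prop) hkc.continuousOn, cfc_const_one ℝ a]
    rw [← h1]
    exact hmonoc (hFc n) (by fun_prop) fun s _ => hFk n s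
  have hhp : cfc h a ≤ p := by
    have := hfp 0
    simpa [hF, he] using this
  have hat : cfc (fun s => s - t) a = a - algebraMap ℝ A t := by
    rw [cfc_sub (fun s => s) (fun _ => t) a, cfc_id' ℝ a, cfc_const t a]
  have hta : cfc (fun s => t - s) a = algebraMap ℝ A t - a := by
    rw [cfc_sub (fun _ => t) (fun s => s) a, cfc_id' ℝ a, cfc_const t a]
  have hup : a - algebraMap ℝ A t ≤ K • p := by
    refine le_trans ?_ (smul_le_smul_of_nonneg_left hhp hK0.le)
    rw [← hat, ← cfc_smul K h a hhc.continuousOn]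
    refine hmonoc (by fun_prop) (by fun_prop) fun s hs => ?_
    have h1 : (s - t) / K ≤ 1 := (div_le_one hK0).2 ((le_abs_self _).trans (hK s hs))
    have h2 : (s - t) / K ≤ h s := (le_min h1 le_rfl).trans (le_max_right _ _)
    simpa [mul_comm] using (div_le_iff₀ hK0).1 h2
  have hlow : algebraMap ℝ A t - a ≤ K • (1 - p) := by
    refine le_trans ?_ (smul_le_smul_of_nonneg_left (le_sub_comm.1 hpk) hK0.le)
    rw [← hta, ← cfc_smul K k a hkc.continuousOn]
    refine hmonoc (by fun_prop) (by fun_prop) fun s hs => ?_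
    have h1 : (t - s) / K ≤ 1 := (div_le_one hK0).2
      ((le_abs_self _).trans ((abs_sub_comm t s).le.trans (hK s hs)))
    have h2 : (t - s) / K ≤ k s := (le_min h1 le_rfl).trans (le_max_right _ _)
    simpa [mul_comm] using (div_le_iff₀ hK0).1 h2
  refine ⟨p, hpC, hp, hpp, ?_, ?_⟩
  · have h1 := hp.conjugate_le_conjugate hlow
    have h2 : p * (K • (1 - p)) * p = 0 := by
      rw [mul_smul_comm, mul_sub, mul_one, hpp, sub_self, smul_zero, zero_mul]
    rw [h2, ← neg_sub, mul_neg, neg_mul, neg_nonpos] at h1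
    exact h1
  · have h1 := ((IsSelfAdjoint.one A).sub hp).conjugate_le_conjugate hup
    have h2 : (1 - p) * (K • p) * (1 - p) = 0 := by
      rw [mul_smul_comm, sub_mul, one_mul, hpp, sub_self, smul_zero, zero_mul]
    rwa [h2] at h1

/-- Subtracting half the bound times a spectral projection halves the bound. -/
lemma halving_step {a p : A} {t : ℝ} (hp : IsSelfAdjoint p) (hpp : p * p = p)
    (hap : a * p = p * a) (h0 : 0 ≤ a) (h1 : a ≤ algebraMap ℝ A (2 * t))
    (hlow : 0 ≤ p * (a - algebraMap ℝ A t) * p)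
    (hup : (1 - p) * (a - algebraMap ℝ A t) * (1 - p) ≤ 0) :
    0 ≤ a - t • p ∧ a - t • p ≤ algebraMap ℝ A t := by
  have hq : IsSelfAdjoint (1 - p) := (IsSelfAdjoint.one A).sub hp
  have hpap : p * a * p = p * a := by rw [mul_assoc, hap, ← mul_assoc, hpp]
  constructor
  · have h2 := hq.conjugate_nonneg h0
    convert add_nonneg hlow h2 using 1
    simp only [Algebra.algebraMap_eq_smul_one, mul_sub, sub_mul, mul_one, one_mul,
      mul_smul_comm, smul_mul_assoc, hpp, hpap, hap]
    abel
  · have h2 := hp.conjugate_nonneg (sub_nonneg.2 h1)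
    rw [← sub_nonneg]
    convert add_nonneg h2 (neg_nonneg.2 hup) using 1
    simp only [Algebra.algebraMap_eq_smul_one, mul_sub, sub_mul, mul_one, one_mul,
      mul_smul_comm, smul_mul_assoc, hpp, hpap, hap, two_mul, add_smul, mul_add, add_mul, smul_sub,
      sub_self]
    abel

/-- Approximation from below by real combinations of projections of a commutative
*-subalgebra that has spectral projections; the combination is encoded as a finite family of coefficients and projections. -/
lemma exists_approx_below {C : StarSubalgebra ℂ A}
    (hcomm : ∀ x ∈ C, ∀ y ∈ C, x * y = y * x)
    (hproj : ∀ a ∈ C, IsSelfAdjoint a → ∀ t : ℝ,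
      ∃ p ∈ C, IsSelfAdjoint p ∧ p * p = p ∧ 0 ≤ p * (a - algebraMap ℝ A t) * p ∧
        (1 - p) * (a - algebraMap ℝ A t) * (1 - p) ≤ 0)
    {a : A} (haC : a ∈ C) (ha : IsSelfAdjoint a) {ε : ℝ} (hε : 0 < ε) :
    ∃ (m : ℕ) (c : Fin m → ℝ) (p : Fin m → A),
      (∀ i, p i ∈ C ∧ star (p i) = p i ∧ p i * p i = p i) ∧
      (∑ i, c i • p i) ≤ a ∧ ‖a - ∑ i, c i • p i‖ ≤ ε := by
  have key : ∀ n : ℕ, ∃ (m : ℕ) (c : Fin m → ℝ) (p : Fin m → A),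
      (∀ i, p i ∈ C ∧ star (p i) = p i ∧ p i * p i = p i) ∧
      0 ≤ a - ∑ i, c i • p i ∧ a - ∑ i, c i • p i ≤ algebraMap ℝ A (2 * ‖a‖ / 2 ^ n) := by
    intro n
    induction n with
    | zero =>
      -- The starting combination is `-‖a‖ • 1`.
      refine ⟨1, fun _ => -‖a‖, fun _ => 1, fun _ => ⟨one_mem C, star_one _, one_mul _⟩, ?_, ?_⟩
      · have := ha.neg_algebraMap_norm_le_self
        simpa [Algebra.algebraMap_eq_smul_one, neg_le_iff_add_nonneg] using this
      · have := ha.le_algebraMap_norm_self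
        simpa [Algebra.algebraMap_eq_smul_one, two_mul, add_smul] using this
    | succ n ih =>
      obtain ⟨m, c, p, hp, h0, h1⟩ := ih
      set b := a - ∑ i, c i • p i with hb
      have hbC : b ∈ C := sub_mem haC (sum_mem fun i _ => by
        rw [← Complex.coe_smul]
        exact SMulMemClass.smul_mem _ (hp i).1)
      obtain ⟨r, hrC, hr, hrr, hlow, hup⟩ :=
        hproj b hbC (IsSelfAdjoint.of_nonneg h0) (2 * ‖a‖ / 2 ^ (n + 1))
      have e : 2 * ‖a‖ / 2 ^ n = 2 * (2 * ‖a‖ / 2 ^ (n + 1)) := by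
        rw [pow_succ]
        field_simp
      rw [e] at h1
      have hs := halving_step hr hrr (hcomm _ hbC _ hrC) h0 h1 hlow hup
      refine ⟨m + 1, Fin.cons (2 * ‖a‖ / 2 ^ (n + 1)) c, Fin.cons r p, ?_, ?_⟩
      · intro i
        refine Fin.cases ⟨hrC, hr, hrr⟩ (fun j => ?_) i
        simpa using hp j
      · rw [Fin.sum_univ_succ]
        simp only [Fin.cons_zero, Fin.cons_succ]
        rw [← sub_sub, sub_right_comm, ← hb]
        exact hs
  obtain ⟨n, hn⟩ := pow_unbounded_of_one_lt (2 * ‖a‖ / ε) (one_lt_two (α := ℝ))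
  obtain ⟨m, c, p, hp, h0, h1⟩ := key n
  refine ⟨m, c, p, hp, sub_nonneg.1 h0, ?_⟩
  have h2 : 2 * ‖a‖ / 2 ^ n ≤ ε := by
    rw [div_lt_iff₀ hε] at hn
    rw [div_le_iff₀ (by positivity)]
    linarith
  refine le_trans ?_ h2
  exact (CStarAlgebra.norm_le_iff_le_algebraMap _ (by positivity) h0).2 h1

end MasaApproximation

/-- Any quotient `B` of an AΣ-algebra `A` (a monotone complete unital C*-algebra each of
whose maximal commutative *-subalgebras is monotone complete) by a surjective
*-homomorphism is a 𝒫-algebra: every selfadjoint `x ∈ B` can be approximated in norm from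
below and from above, within a commutative C*-subalgebra containing `x`, by finite real
linear combinations of projections. -/
theorem statement9
    (A : Type*) [CStarAlgebra A] [PartialOrder A] [StarOrderedRing A]
    (B : Type*) [CStarAlgebra B] [PartialOrder B] [StarOrderedRing B]
    (hA : NetMonotoneComplete A)
    (hmasa : ∀ C : StarSubalgebra ℂ A,
      (∀ x ∈ C, ∀ y ∈ C, x * y = y * x) →
      (∀ D : StarSubalgebra ℂ A, C ≤ D → (∀ x ∈ D, ∀ y ∈ D, x * y = y * x) → D = C) →
      ∀ (ι : Type) [Preorder ι], Nonempty ι → IsDirected ι (· ≤ ·) →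
        ∀ f : ι → A, (∀ i, f i ∈ C) → Monotone f → (∀ i, IsSelfAdjoint (f i)) →
          (∃ u ∈ C, ∀ i, f i ≤ u) →
          ∃ b ∈ C, IsSelfAdjoint b ∧ (∀ i, f i ≤ b) ∧
            ∀ c ∈ C, IsSelfAdjoint c → (∀ i, f i ≤ c) → b ≤ c)
    (q : A →⋆ₐ[ℂ] B) (hq : Function.Surjective q)
    (x : B) (hx : IsSelfAdjoint x) (ε : ℝ) (hε : 0 < ε) :
    ∃ C : StarSubalgebra ℂ B, IsClosed (C : Set B) ∧
      (∀ a ∈ C, ∀ b ∈ C, a * b = b * a) ∧ x ∈ C ∧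
      ∃ (m : ℕ) (c : Fin m → ℝ) (p : Fin m → B)
        (m' : ℕ) (d : Fin m' → ℝ) (p' : Fin m' → B),
        (∀ i, p i ∈ C ∧ star (p i) = p i ∧ p i * p i = p i) ∧
        (∀ i, p' i ∈ C ∧ star (p' i) = p' i ∧ p' i * p' i = p' i) ∧
        (∑ i, c i • p i) ≤ x ∧ x ≤ (∑ i, d i • p' i) ∧
        ‖x - ∑ i, c i • p i‖ ≤ ε ∧ ‖(∑ i, d i • p' i) - x‖ ≤ ε := by
  obtain ⟨a₀, ha₀⟩ := hq x
  obtain ⟨a, ha, rfl⟩ : ∃ a : A, IsSelfAdjoint a ∧ q a = x := by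
    refine ⟨realPart a₀, (realPart a₀).2, ?_⟩
    rw [realPart_apply_coe, ← Complex.coe_smul, map_smul, map_add, map_star, ha₀, hx.star_eq,
      ← two_smul ℝ x, Complex.coe_smul, smul_smul]
    norm_num
  obtain ⟨M, haM, hcomm, hmax⟩ := exists_masa a ha
  have hproj := fun b (hb : b ∈ M) (hbs : IsSelfAdjoint b) (t : ℝ) =>
    exists_spectral_projection hcomm hmax
      (hmasa M hcomm (fun D hMD hD => le_antisymm
        (fun d hd => hmax d fun y hy => hD d hd y (hMD hy)) hMD) ℕ inferInstance inferInstance)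
      hb hbs t
  obtain ⟨m, c, p, hp, hle, hnorm⟩ := exists_approx_below hcomm hproj haM ha hε
  -- The approximation from above is the negative of one from below for `-a`.
  obtain ⟨m', d, p', hp', hle', hnorm'⟩ :=
    exists_approx_below hcomm hproj (neg_mem haM) ha.neg hε
  have hqsum : ∀ {l : ℕ} (r : Fin l → ℝ) (v : Fin l → A),
      q (∑ i, r i • v i) = ∑ i, r i • q (v i) := by
    intro l r v
    rw [map_sum]
    refine Finset.sum_congr rfl fun i _ => ?_
    rw [← Complex.coe_smul, map_smul, Complex.coe_smul]
  have hqmono : ∀ {u v : A}, u ≤ v → q u ≤ q v := fun huv => OrderHomClass.mono q huv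
  have hqnorm : ∀ u : A, ‖q u‖ ≤ ‖u‖ := fun u => NonUnitalStarAlgHom.norm_apply_le q u
  have hsub : ∀ u ∈ M, q u ∈ (M.map q).topologicalClosure := fun u hu =>
    (M.map q).le_topologicalClosure ⟨u, hu, rfl⟩
  have hcommq : ∀ u v : M.map q, u * v = v * u := by
    rintro ⟨_, u, hu, rfl⟩ ⟨_, v, hv, rfl⟩
    apply Subtype.ext
    change q u * q v = q v * q u
    rw [← map_mul, ← map_mul, hcomm u hu v hv]
  have hproj_map : ∀ u : A, u ∈ M ∧ star u = u ∧ u * u = u →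
      q u ∈ (M.map q).topologicalClosure ∧ star (q u) = q u ∧ q u * q u = q u := by
    rintro u ⟨hu, hus, huu⟩
    exact ⟨hsub u hu, by rw [← map_star, hus], by rw [← map_mul, huu]⟩
  refine ⟨(M.map q).topologicalClosure, (M.map q).isClosed_topologicalClosure, ?_, hsub a haM,
    m, c, fun i => q (p i), m', fun i => -d i, fun i => q (p' i),
    fun i => hproj_map _ (hp i), fun i => hproj_map _ (hp' i), ?_, ?_, ?_, ?_⟩
  · intro u hu v hv
    let _ := (M.map q).commRingTopologicalClosure hcommq
    exact congrArg Subtype.val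
      (mul_comm (⟨u, hu⟩ : (M.map q).topologicalClosure) ⟨v, hv⟩)
  · rw [← hqsum]
    exact hqmono hle
  · have h := hqmono hle'
    rw [hqsum, map_neg] at h
    simpa only [neg_smul, Finset.sum_neg_distrib] using le_neg_of_le_neg h
  · rw [← hqsum, ← map_sub]
    exact (hqnorm _).trans hnorm
  · have h := (hqnorm _).trans hnorm'
    rw [map_sub, hqsum, map_neg] at h
    simp only [neg_smul, Finset.sum_neg_distrib]
    rwa [neg_sub_comm] at h
end

section
/- Let H be a complex Hilbert space, I ⊆ B(H) a unital C*-subalgebra of the bounded operators, and r : B(H) → B(H) a positive linear map whose range is contained in I, such that r(y) = y for all y ∈ I, and which satisfies the module property r(x·y) = r(x)·y and r(y·x) = y·r(x) for all x ∈ B(H) and y ∈ I. Then: (i) for every increasing net (x_μ) of selfadjoint elements of I which is bounded above, with least upper bound z in B(H), the element r(z) belongs to I and is the least upper bound of (x_μ) among the selfadjoint elements of I (so I is monotone complete); and (ii) if in addition all x_μ belong to a commutative C*-subalgebra C ⊆ I, then r(z) commutes with every element of C. -/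
/-!
For part (i), positivity of `r` together with `r (f i) = f i` and `r w = w` for `w ∈ I` carries
the inequalities `f i ≤ z` and `z ≤ w` over to `f i ≤ r z` and `r z ≤ w`.

For part (ii), the module property reduces the claim to `z` commuting with `C`, and this holds
because `z` commutes with everything that commutes with the whole net. If a unitary `u` commutes
with every `f i`, then `u z u*` is again an upper bound of the net, hence `z ≤ u z u*`; the same
for `u*` gives the reverse inequality, so `u z = z u`. The commutant of a selfadjoint family is a
C*-algebra, so it is spanned by its unitaries.
-/

open ContinuousLinearMap in
lemma le_conj_of_unitary_commute
    {H : Type*} [NormedAddCommGroup H] [InnerProductSpace ℂ H] [CompleteSpace H]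
    {ι : Type*} {f : ι → (H →L[ℂ] H)} {z : H →L[ℂ] H}
    (hub : ∀ i, (z - f i).IsPositive)
    (hlub : ∀ w : H →L[ℂ] H, (∀ i, (w - f i).IsPositive) → (w - z).IsPositive)
    {u : H →L[ℂ] H} (hu : u * star u = 1) (hc : ∀ i, u * f i = f i * u) :
    (u * z * star u - z).IsPositive := by
  refine hlub _ fun i => ?_
  have h : u * z * star u - f i = u * (z - f i) * star u := by
    rw [mul_sub, sub_mul, hc, mul_assoc (f i), hu, mul_one]
  rw [h, ← nonneg_iff_isPositive]
  exact star_right_conjugate_nonneg ((nonneg_iff_isPositive _).2 (hub i)) u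

open ContinuousLinearMap in
lemma unitary_commute_lub
    {H : Type*} [NormedAddCommGroup H] [InnerProductSpace ℂ H] [CompleteSpace H]
    {ι : Type*} {f : ι → (H →L[ℂ] H)} {z : H →L[ℂ] H}
    (hub : ∀ i, (z - f i).IsPositive)
    (hlub : ∀ w : H →L[ℂ] H, (∀ i, (w - f i).IsPositive) → (w - z).IsPositive)
    {u : H →L[ℂ] H} (hu : u * star u = 1) (hu' : star u * u = 1)
    (hc : ∀ i, u * f i = f i * u) : u * z = z * u := by
  have hc' : ∀ i, star u * f i = f i * star u := fun i => by
    calc star u * f i = star u * (f i * u) * star u := by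
          rw [mul_assoc, mul_assoc, hu, mul_one]
      _ = f i * star u := by rw [← hc, ← mul_assoc, hu', one_mul]
  have h1 : z ≤ u * z * star u := le_conj_of_unitary_commute hub hlub hu hc
  have h2 : z ≤ star u * z * u := by
    have := le_conj_of_unitary_commute hub hlub (u := star u) (by rwa [star_star]) hc'
    rwa [star_star] at this
  have h3 : u * z * star u ≤ z := by
    have := star_right_conjugate_le_conjugate h2 u
    have e : u * (star u * z * u) * star u = z := by
      simp only [mul_assoc, hu, mul_one]
      rw [← mul_assoc, hu, one_mul]
    rwa [e] at this
  calc u * z = u * z * star u * u := by rw [mul_assoc _ (star u), hu', mul_one]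
    _ = z * u := by rw [le_antisymm h3 h1]

/-- A least upper bound in `B(H)` of a selfadjoint family lies in the bicommutant of the family. -/
lemma commute_lub
    {H : Type*} [NormedAddCommGroup H] [InnerProductSpace ℂ H] [CompleteSpace H]
    {ι : Type*} {f : ι → (H →L[ℂ] H)} {z : H →L[ℂ] H}
    (hfsa : ∀ i, IsSelfAdjoint (f i))
    (hub : ∀ i, (z - f i).IsPositive)
    (hlub : ∀ w : H →L[ℂ] H, (∀ i, (w - f i).IsPositive) → (w - z).IsPositive)
    {c : H →L[ℂ] H} (hc : ∀ i, c * f i = f i * c) : c * z = z * c := by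
  let A : StarSubalgebra ℂ (H →L[ℂ] H) := StarSubalgebra.centralizer ℂ (Set.range f)
  have hA : ∀ a : A, ∀ i, (a : H →L[ℂ] H) * f i = f i * a := fun a i =>
    ((StarSubalgebra.mem_centralizer_iff ℂ).1 a.2 (f i) ⟨i, rfl⟩).1.symm
  have hclosed : IsClosed (A : Set (H →L[ℂ] H)) := by
    have : (A : Set (H →L[ℂ] H)) = (Set.range f ∪ star (Set.range f)).centralizer :=
      StarSubalgebra.coe_centralizer ℂ _
    rw [this]
    exact Set.isClosed_centralizer _
  have hcA : c ∈ A := by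
    rw [StarSubalgebra.mem_centralizer_iff]
    rintro _ ⟨i, rfl⟩
    rw [(hfsa i).star_eq]
    exact ⟨(hc i).symm, (hc i).symm⟩
  have : IsClosed (A : Set (H →L[ℂ] H)) := hclosed
  have hspan : (⟨c, hcA⟩ : A) ∈ Submodule.span ℂ (unitary A : Set A) := by
    rw [CStarAlgebra.span_unitary]
    trivial
  suffices h : ∀ a ∈ Submodule.span ℂ (unitary A : Set A),
      (a : H →L[ℂ] H) * z = z * a from h _ hspan
  intro a ha
  induction ha using Submodule.span_induction with
  | mem u hu =>
    exact unitary_commute_lub hub hlub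
      (congrArg Subtype.val hu.2) (congrArg Subtype.val hu.1) (hA u)
  | zero => simp
  | add a b _ _ ha hb => simp [add_mul, mul_add, ha, hb]
  | smul t a _ ha => simp [ha]


/-- Let `I` be a unital C*-subalgebra of `B(H)` and `r` a positive linear retraction of
`B(H)` onto `I` which is an `I`-module map (conditional expectation). Then (i) for every
increasing net of selfadjoint elements of `I` bounded above with least upper bound `z` in
`B(H)` (with respect to the Loewner order `a ≤ b ↔ (b - a)` positive), the element `r z`
lies in `I` and is the least upper bound of the net among the selfadjoint elements of `I`
— so `I` is monotone complete — and (ii) if moreover the net lies in a commutative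
C*-subalgebra `C ⊆ I`, then `r z` commutes with every element of `C`. -/
theorem statement10
    (H : Type*) [NormedAddCommGroup H] [InnerProductSpace ℂ H] [CompleteSpace H]
    (I : StarSubalgebra ℂ (H →L[ℂ] H)) (hIclosed : IsClosed (I : Set (H →L[ℂ] H)))
    (r : (H →L[ℂ] H) →ₗ[ℂ] (H →L[ℂ] H))
    (hrpos : ∀ x : H →L[ℂ] H, x.IsPositive → (r x).IsPositive)
    (hrange : ∀ x : H →L[ℂ] H, r x ∈ I)
    (hretr : ∀ y ∈ I, r y = y)
    (hmod : ∀ x : H →L[ℂ] H, ∀ y ∈ I, r (x * y) = r x * y ∧ r (y * x) = y * r x)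
    (ι : Type*) [Preorder ι] [Nonempty ι] (hdir : IsDirected ι (· ≤ ·))
    (f : ι → (H →L[ℂ] H))
    (hfI : ∀ i, f i ∈ I) (hfsa : ∀ i, IsSelfAdjoint (f i))
    (hmono : ∀ i j, i ≤ j → (f j - f i).IsPositive)
    (z : H →L[ℂ] H)
    (hub : ∀ i, (z - f i).IsPositive)
    (hlub : ∀ w : H →L[ℂ] H, (∀ i, (w - f i).IsPositive) → (w - z).IsPositive) :
    (r z ∈ I ∧ IsSelfAdjoint (r z) ∧ (∀ i, (r z - f i).IsPositive) ∧
      ∀ w ∈ I, IsSelfAdjoint w → (∀ i, (w - f i).IsPositive) → (w - r z).IsPositive) ∧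
    ∀ C : StarSubalgebra ℂ (H →L[ℂ] H), (C : Set (H →L[ℂ] H)) ⊆ I →
      (∀ a ∈ C, ∀ b ∈ C, a * b = b * a) → (∀ i, f i ∈ C) →
      ∀ c ∈ C, r z * c = c * r z := by
  have key : ∀ i, (r z - f i).IsPositive := fun i => by
    have := hrpos _ (hub i)
    rwa [map_sub, hretr _ (hfI i)] at this
  refine ⟨⟨hrange z, ?_, key, ?_⟩, ?_⟩
  · obtain ⟨i⟩ := ‹Nonempty ι›
    have := (key i).isSelfAdjoint.add (hfsa i)
    rwa [sub_add_cancel] at this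
  · intro w hw _ hwf
    have := hrpos _ (hlub w hwf)
    rwa [map_sub, hretr _ hw] at this
  · intro C hCI hCcomm hfC c hc
    have h := commute_lub hfsa hub hlub fun i => hCcomm c hc _ (hfC i)
    rw [← (hmod z c (hCI hc)).1, ← (hmod z c (hCI hc)).2, h]
end

section
/- Let H be a complex Hilbert space and let p, q be orthogonal projections on H (bounded operators with p = p* = p² and q = q* = q²). Let r denote the orthogonal projection onto the closed subspace ran(p) ∩ ran(q). Then: (i) for every vector ξ ∈ H, (pq)ⁿp ξ converges to r ξ as n → ∞, i.e. the sequence ((pq)ⁿp) converges to r in the strong operator topology; (ii) r ≤ p and r ≤ q; and (iii) every positive bounded operator z on H with z ≤ p and z ≤ q satisfies z ≤ r, so r is the greatest lower bound of p and q among positive operators. -/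
/-!
The key point is strong convergence of `aₙ = (pq)ⁿp` (von Neumann's alternating projections).
The `aₙ` are self-adjoint with `aₘ aₙ = aₘ₊ₙ`, so `⟪aₘ ξ, aₙ ξ⟫` is `c (m + n)` with
`c k = ⟪aₖ ξ, ξ⟫`. Here `c (2k) = ‖aₖ ξ‖²` and `c (2k+1) = ‖q aₖ ξ‖²`, so `c` is nonincreasing and
nonnegative, hence convergent, and `‖aₘ ξ - aₙ ξ‖² = c (2m) + c (2n) - 2 c (m+n)` tends to `0`.
The limit `η` is fixed by `p` and by `pq`, hence by `q` (a projection that preserves the norm of a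
vector fixes it), so `η = r η = lim r aₙ ξ = r ξ`.

The order statements are algebraic. `r ≤ p` follows from `p r = r`. If `0 ≤ z ≤ p, q`, then
`p z = z = q z`, so `r z = z = z r`, and compressing `z ≤ p` by `r` gives `z ≤ r`.
-/

namespace AlternatingProjections

open Filter Topology

variable {H : Type*} [NormedAddCommGroup H] [InnerProductSpace ℂ H] [CompleteSpace H]

theorem inner_symm {p : H →L[ℂ] H} (hp : star p = p) (x y : H) :
    inner ℂ (p x) y = inner ℂ x (p y) := by
  conv_lhs => rw [← hp]
  rw [ContinuousLinearMap.star_eq_adjoint, ContinuousLinearMap.adjoint_inner_left]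

theorem re_inner_proj {p : H →L[ℂ] H} (hp : star p = p ∧ p * p = p) (x : H) :
    (inner ℂ (p x) x).re = ‖p x‖ ^ 2 := by
  have h : p (p x) = p x := DFunLike.congr_fun hp.2 x
  rw [← h, inner_symm hp.1, h]
  simpa using inner_self_eq_norm_sq (𝕜 := ℂ) (p x)

theorem norm_sub_proj_sq {p : H →L[ℂ] H} (hp : star p = p ∧ p * p = p) (x : H) :
    ‖p x - x‖ ^ 2 = ‖x‖ ^ 2 - ‖p x‖ ^ 2 := by
  have h := norm_sub_sq (𝕜 := ℂ) (p x) x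
  have h2 := re_inner_proj hp x
  simp only [RCLike.re_eq_complex_re] at h
  linarith

theorem norm_proj_le {p : H →L[ℂ] H} (hp : star p = p ∧ p * p = p) (x : H) : ‖p x‖ ≤ ‖x‖ := by
  have h := norm_sub_proj_sq hp x
  exact le_of_sq_le_sq (by nlinarith [sq_nonneg ‖p x - x‖]) (norm_nonneg _)

theorem proj_eq_of_norm_le {p : H →L[ℂ] H} (hp : star p = p ∧ p * p = p) {x : H}
    (hx : ‖x‖ ≤ ‖p x‖) : p x = x := by
  have h := norm_sub_proj_sq hp x
  have : ‖p x - x‖ ^ 2 = 0 := le_antisymm (by nlinarith [norm_nonneg x]) (sq_nonneg _)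
  exact sub_eq_zero.1 (norm_eq_zero.1 (by simpa using this))

section

variable {p q : H →L[ℂ] H}

theorem mul_alt (hp : p * p = p) (n : ℕ) : p * ((p * q) ^ n * p) = (p * q) ^ n * p := by
  cases n with
  | zero => simpa using hp
  | succ n => rw [pow_succ']; simp only [← mul_assoc, hp]

theorem alt_mul_alt (hp : p * p = p) (m n : ℕ) :
    ((p * q) ^ m * p) * ((p * q) ^ n * p) = (p * q) ^ (m + n) * p := by
  rw [mul_assoc, mul_alt hp, ← mul_assoc, pow_add]

theorem star_alt (hp : star p = p) (hq : star q = q) (n : ℕ) :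
    star ((p * q) ^ n * p) = (p * q) ^ n * p := by
  rw [star_mul, star_pow, star_mul, hp, hq]
  exact (mul_pow_mul p q n).symm

/-- The sequence `c k = ⟪(pq)ᵏ p ξ, ξ⟫` of the convergence argument. These inner products are real,
by self-adjointness, and are recorded by their real parts. -/
noncomputable def coeff (p q : H →L[ℂ] H) (ξ : H) (k : ℕ) : ℝ :=
  (inner ℂ (((p * q) ^ k * p) ξ) ξ).re

theorem re_inner_alt (hp : star p = p ∧ p * p = p) (hq : star q = q ∧ q * q = q) (ξ : H)
    (m n : ℕ) :
    (inner ℂ (((p * q) ^ m * p) ξ) (((p * q) ^ n * p) ξ)).re = coeff p q ξ (n + m) := by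
  rw [← inner_symm (star_alt hp.1 hq.1 n), ← mul_apply_eq_comp, alt_mul_alt hp.2]
  rfl

theorem coeff_even (hp : star p = p ∧ p * p = p) (hq : star q = q ∧ q * q = q) (ξ : H) (n : ℕ) :
    coeff p q ξ (n + n) = ‖((p * q) ^ n * p) ξ‖ ^ 2 := by
  rw [← re_inner_alt hp hq]
  exact inner_self_eq_norm_sq (𝕜 := ℂ) _

theorem coeff_odd (hp : star p = p ∧ p * p = p) (hq : star q = q ∧ q * q = q) (ξ : H) (n : ℕ) :
    coeff p q ξ (n + n + 1) = ‖q (((p * q) ^ n * p) ξ)‖ ^ 2 := by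
  have h : (p * q) ^ (n + 1) * p = p * (q * ((p * q) ^ n * p)) := by
    rw [pow_succ']; simp only [mul_assoc]
  have h2 : p (((p * q) ^ n * p) ξ) = ((p * q) ^ n * p) ξ := DFunLike.congr_fun (mul_alt hp.2 n) ξ
  rw [add_assoc, ← re_inner_alt hp hq ξ (n + 1) n, h, mul_apply_eq_comp,
    inner_symm hp.1, h2, mul_apply_eq_comp, re_inner_proj hq]

theorem coeff_antitone (hp : star p = p ∧ p * p = p) (hq : star q = q ∧ q * q = q) (ξ : H) :
    Antitone (coeff p q ξ) := by
  refine antitone_nat_of_succ_le fun k => ?_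
  obtain ⟨n, rfl | rfl⟩ := k.even_or_odd'
  · rw [two_mul, coeff_odd hp hq, coeff_even hp hq]
    gcongr
    exact norm_proj_le hq _
  · rw [two_mul, coeff_odd hp hq, show n + n + 1 + 1 = (n + 1) + (n + 1) by ring,
      coeff_even hp hq]
    gcongr
    have h : (p * q) ^ (n + 1) * p = p * (q * ((p * q) ^ n * p)) := by
      rw [pow_succ']; simp only [mul_assoc]
    rw [h]
    exact norm_proj_le hp _

theorem coeff_nonneg (hp : star p = p ∧ p * p = p) (hq : star q = q ∧ q * q = q) (ξ : H) (k : ℕ) :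
    0 ≤ coeff p q ξ k := by
  refine le_trans ?_ (coeff_antitone hp hq ξ (Nat.le_add_left k k))
  rw [coeff_even hp hq]
  positivity

theorem norm_alt_sub_sq (hp : star p = p ∧ p * p = p) (hq : star q = q ∧ q * q = q) (ξ : H)
    (m n : ℕ) :
    ‖((p * q) ^ m * p) ξ - ((p * q) ^ n * p) ξ‖ ^ 2 =
      coeff p q ξ (m + m) + coeff p q ξ (n + n) - 2 * coeff p q ξ (n + m) := by
  rw [norm_sub_sq (𝕜 := ℂ), coeff_even hp hq, coeff_even hp hq, ← re_inner_alt hp hq]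
  simp only [RCLike.re_eq_complex_re]
  ring

theorem cauchySeq_alt (hp : star p = p ∧ p * p = p) (hq : star q = q ∧ q * q = q) (ξ : H) :
    CauchySeq (fun n : ℕ => ((p * q) ^ n * p) ξ) := by
  have hbdd : BddBelow (Set.range (coeff p q ξ)) :=
    ⟨0, by rintro _ ⟨k, rfl⟩; exact coeff_nonneg hp hq ξ k⟩
  have hlim := tendsto_atTop_ciInf (coeff_antitone hp hq ξ) hbdd
  set l := ⨅ k, coeff p q ξ k
  have hl : ∀ k, l ≤ coeff p q ξ k := fun k => ciInf_le hbdd k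
  rw [Metric.cauchySeq_iff']
  intro ε hε
  obtain ⟨N, hN⟩ := (hlim.eventually (gt_mem_nhds (show l < l + ε ^ 2 / 2 by
    linarith [pow_pos hε 2]))).exists
  refine ⟨N, fun n hn => ?_⟩
  rw [dist_eq_norm]
  refine lt_of_pow_lt_pow_left₀ 2 hε.le ?_
  rw [norm_alt_sub_sq hp hq]
  have h1 := coeff_antitone hp hq ξ (show N ≤ n + n by omega)
  have h2 := coeff_antitone hp hq ξ (show N ≤ N + N by omega)
  linarith [hl (N + n)]

theorem tendsto_alt {r : H →L[ℂ] H} (hp : star p = p ∧ p * p = p) (hq : star q = q ∧ q * q = q)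
    (hrp : r * p = r) (hrq : r * q = r) (hrfix : ∀ ξ : H, p ξ = ξ → q ξ = ξ → r ξ = ξ) (ξ : H) :
    Tendsto (fun n : ℕ => ((p * q) ^ n * p) ξ) atTop (𝓝 (r ξ)) := by
  obtain ⟨η, hη⟩ := cauchySeq_tendsto_of_complete (cauchySeq_alt hp hq ξ)
  have hpη : p η = η := by
    refine tendsto_nhds_unique ((p.continuous.tendsto η).comp hη) (hη.congr fun n => ?_)
    exact (DFunLike.congr_fun (mul_alt hp.2 n) ξ).symm
  have hpqη : p (q η) = η := by
    refine tendsto_nhds_unique (((p * q).continuous.tendsto η).comp hη)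
      ((hη.comp (tendsto_add_atTop_nat 1)).congr fun n => ?_)
    simp only [Function.comp_apply, pow_succ', mul_assoc, mul_apply_eq_comp]
  have hqη : q η = η := by
    apply proj_eq_of_norm_le hq
    conv_lhs => rw [← hpqη]
    exact norm_proj_le hp _
  have hra : ∀ n : ℕ, r * ((p * q) ^ n * p) = r := by
    intro n
    induction n with
    | zero => simpa using hrp
    | succ n ih =>
      rw [pow_succ', mul_assoc, ← mul_assoc r, ← mul_assoc r, hrp, hrq, ih]
  have hrη : r η = r ξ := by
    refine tendsto_nhds_unique ((r.continuous.tendsto η).comp hη)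
      (tendsto_const_nhds.congr fun n => ?_)
    exact (DFunLike.congr_fun (hra n) ξ).symm
  rwa [← hrη, hrfix η hpη hqη]

end

theorem mul_eq_of_isPositive {p z : H →L[ℂ] H} (hp : star p = p ∧ p * p = p) (hz : z.IsPositive)
    (hzp : (p - z).IsPositive) : p * z = z :=
  (IsStarProjection.mul_right_and_mul_left_of_nonneg_of_le (a := z) (e := p) ⟨hp.2, hp.1⟩
    ((ContinuousLinearMap.nonneg_iff_isPositive z).2 hz) hzp).2

theorem isPositive_sub_proj {p r : H →L[ℂ] H} (hp : star p = p ∧ p * p = p)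
    (hr : star r = r ∧ r * r = r) (hpr : p * r = r) (hrp : r * p = r) : (p - r).IsPositive := by
  have : p - r = star (p - r) * (p - r) := by
    rw [star_sub, hp.1, hr.1, mul_sub, sub_mul, sub_mul, hp.2, hr.2, hpr, hrp]
    abel
  rw [this]
  exact ContinuousLinearMap.isPositive_adjoint_comp_self (p - r)

end AlternatingProjections

open AlternatingProjections

/-- For orthogonal projections `p, q` on a complex Hilbert space `H`, letting `r` be the
orthogonal projection onto `ran p ∩ ran q` (characterized as the selfadjoint idempotent
whose range is contained in, and which fixes, that subspace): (i) the alternating products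
`(pq)ⁿp` converge strongly to `r`; (ii) `r ≤ p` and `r ≤ q`; (iii) every positive operator
`z` with `z ≤ p` and `z ≤ q` satisfies `z ≤ r` — `r` is the greatest lower bound of `p`
and `q` among positive operators.  Here `a ≤ b` means `(b - a)` is a positive operator. -/
theorem statement12
    (H : Type*) [NormedAddCommGroup H] [InnerProductSpace ℂ H] [CompleteSpace H]
    (p q r : H →L[ℂ] H)
    (hp : star p = p ∧ p * p = p) (hq : star q = q ∧ q * q = q)
    (hrsa : star r = r) (hridem : r * r = r)
    (hrran : ∀ ξ : H, p (r ξ) = r ξ ∧ q (r ξ) = r ξ)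
    (hrfix : ∀ ξ : H, p ξ = ξ → q ξ = ξ → r ξ = ξ) :
    (∀ ξ : H, Filter.Tendsto (fun n : ℕ => ((p * q) ^ n * p) ξ)
      Filter.atTop (nhds (r ξ))) ∧
    ((p - r).IsPositive ∧ (q - r).IsPositive) ∧
    ∀ z : H →L[ℂ] H, z.IsPositive → (p - z).IsPositive → (q - z).IsPositive →
      (r - z).IsPositive := by
  have hpr : p * r = r := ContinuousLinearMap.ext fun ξ => (hrran ξ).1
  have hqr : q * r = r := ContinuousLinearMap.ext fun ξ => (hrran ξ).2
  have hrp : r * p = r := by simpa [hrsa, hp.1] using congrArg star hpr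
  have hrq : r * q = r := by simpa [hrsa, hq.1] using congrArg star hqr
  refine ⟨tendsto_alt hp hq hrp hrq hrfix,
    ⟨isPositive_sub_proj hp ⟨hrsa, hridem⟩ hpr hrp,
      isPositive_sub_proj hq ⟨hrsa, hridem⟩ hqr hrq⟩, fun z hz hzp hzq => ?_⟩
  have hpz := mul_eq_of_isPositive hp hz hzp
  have hqz := mul_eq_of_isPositive hq hz hzq
  have hrz : r * z = z := ContinuousLinearMap.ext fun ξ =>
    hrfix (z ξ) (DFunLike.congr_fun hpz ξ) (DFunLike.congr_fun hqz ξ)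
  have hzsa : star z = z := hz.isSelfAdjoint
  have hzr : z * r = z := by simpa [hrsa, hzsa] using congrArg star hrz
  have h : r - z = r * ((p - z) * star r) := by
    rw [hrsa, sub_mul, mul_sub, hpr, hridem, hzr, hrz]
  rw [h]
  exact hzp.conj_adjoint r
end

section
/- Let H be a complex Hilbert space and M a von Neumann algebra on H, i.e. a unital *-subalgebra of B(H) equal to its double commutant. Let (p_i)_{i∈I} be a nonempty family of orthogonal projections belonging to M and let r be the orthogonal projection onto the closed subspace ⋂_{i∈I} ran(p_i). Then r belongs to M, r ≤ p_i for all i ∈ I, and every projection s ∈ M with s ≤ p_i for all i ∈ I satisfies s ≤ r; consequently the projections of a von Neumann algebra form a complete lattice. -/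
/-! The projection `r` onto `⋂ᵢ ran (p i)` lies in `M` because its range is invariant under the
commutant: if `y` commutes with every `p i`, then `y` preserves each `ran (p i)`, hence their
intersection. The order claims reduce to `p ≤ q ↔ q * p = p` for projections, i.e. to inclusion of
ranges: `p i * r = r` holds by hypothesis, and if every `p i` fixes `ran s` then so does `r`. -/

/-- For star projections, the operator order is inclusion of ranges, `ran p ⊆ ran q` being written
pointwise as: `q` fixes every `p ξ`. -/
theorem isPositive_sub_iff_fixes {H : Type*} [NormedAddCommGroup H] [InnerProductSpace ℂ H]
    [CompleteSpace H] {p q : H →L[ℂ] H} (hp : IsStarProjection p) (hq : IsStarProjection q) :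
    (q - p).IsPositive ↔ ∀ ξ, q (p ξ) = p ξ := by
  rw [← ContinuousLinearMap.le_def, hp.le_iff_mul_eq_right hq, ContinuousLinearMap.ext_iff]
  rfl

/-- Let `M` be a von Neumann algebra on a complex Hilbert space `H`, `(p_i)` a nonempty
family of orthogonal projections in `M`, and `r` the orthogonal projection onto the closed
subspace `⋂ᵢ ran (p_i)` (characterized as the selfadjoint idempotent whose range is
contained in, and which fixes, that subspace). Then `r ∈ M`, `r ≤ p_i` for all `i`, and
every projection `s ∈ M` below all `p_i` satisfies `s ≤ r`; consequently the projections
of a von Neumann algebra form a complete lattice. Here `a ≤ b` means that `(b - a)` is a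
positive operator. -/
theorem statement14
    (H : Type*) [NormedAddCommGroup H] [InnerProductSpace ℂ H] [CompleteSpace H]
    (M : VonNeumannAlgebra H)
    (ι : Type*) [Nonempty ι] (p : ι → (H →L[ℂ] H))
    (hpM : ∀ i, p i ∈ M)
    (hp : ∀ i, star (p i) = p i ∧ p i * p i = p i)
    (r : H →L[ℂ] H) (hrsa : star r = r) (hridem : r * r = r)
    (hrran : ∀ (ξ : H) (i : ι), p i (r ξ) = r ξ)
    (hrfix : ∀ ξ : H, (∀ i, p i ξ = ξ) → r ξ = ξ) :
    r ∈ M ∧ (∀ i, (p i - r).IsPositive) ∧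
    ∀ s : H →L[ℂ] H, s ∈ M → star s = s → s * s = s →
      (∀ i, (p i - s).IsPositive) → (r - s).IsPositive := by
  have hP : ∀ i, IsStarProjection (p i) := fun i => ⟨(hp i).2, (hp i).1⟩
  have hR : IsStarProjection r := ⟨hridem, hrsa⟩
  refine ⟨?_, fun i => (isPositive_sub_iff_fixes hR (hP i)).2 fun ξ => hrran ξ i, ?_⟩
  · rw [VonNeumannAlgebra.IsStarProjection.mem_iff hR]
    rintro y hy _ ⟨ξ, rfl⟩
    refine ⟨y (r ξ), hrfix _ fun i => ?_⟩
    have h := DFunLike.congr_fun (VonNeumannAlgebra.mem_commutant_iff.1 hy _ (hpM i)) (r ξ)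
    simpa [hrran] using h
  · intro s _ hs hss hle
    have hS : IsStarProjection s := ⟨hss, hs⟩
    exact (isPositive_sub_iff_fixes hS hR).2 fun ξ =>
      hrfix _ fun i => (isPositive_sub_iff_fixes hS (hP i)).1 (hle i) ξ
end

section
/- Let H be a complex Hilbert space and X ⊆ B(H) a complex linear subspace containing the identity operator and closed under adjoints. A state of X is a linear functional ρ : X → ℂ with ρ(1) = 1 such that ρ(x) ≥ 0 for every x ∈ X which is a positive operator. Let ρ and σ be states of X such that ρ is separated from σ: there exist no λ ∈ (0, 1] and state σ′ of X with σ = λρ + (1−λ)σ′. Then for every ε > 0 there exists a positive operator c ∈ X with ρ(c) = 1 and σ(c) ≤ ε. -/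
open scoped ComplexOrder

/-!
If no such `c` existed, then `σ c > ε ρ c` for every positive `c` with `ρ c ≠ 0` (rescale `c` so that
`ρ c = 1`), so with `δ = min ε (1/2)` the functional `σ - δ ρ` is positive. Dividing it by
its value `1 - δ` at the identity gives a state `σ'` with `σ = δ ρ + (1 - δ) σ'`,
which separation forbids.
-/

/-- If `ρ` and `σ` are states of an operator system `X ⊆ B(H)` such that `ρ` is separated
from `σ` (no convex decomposition `σ = λρ + (1-λ)σ'` with `λ ∈ (0,1]` and `σ'` a state),
then for every `ε > 0` there exists a positive element `c ∈ X` with `ρ(c) = 1` and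
`σ(c) ≤ ε`. -/
theorem statement16
    (H : Type*) [NormedAddCommGroup H] [InnerProductSpace ℂ H] [CompleteSpace H]
    (X : Submodule ℂ (H →L[ℂ] H))
    (hX1 : (1 : H →L[ℂ] H) ∈ X)
    (hXstar : ∀ x ∈ X, star x ∈ X)
    (ρ σ : X →ₗ[ℂ] ℂ)
    (hρ1 : ρ ⟨1, hX1⟩ = 1)
    (hρpos : ∀ x : X, (x : H →L[ℂ] H).IsPositive → 0 ≤ ρ x)
    (hσ1 : σ ⟨1, hX1⟩ = 1)
    (hσpos : ∀ x : X, (x : H →L[ℂ] H).IsPositive → 0 ≤ σ x)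
    (hsep : ¬ ∃ (l : ℝ) (σ' : X →ₗ[ℂ] ℂ), 0 < l ∧ l ≤ 1 ∧
      σ' ⟨1, hX1⟩ = 1 ∧ (∀ x : X, (x : H →L[ℂ] H).IsPositive → 0 ≤ σ' x) ∧
      ∀ x : X, σ x = (l : ℂ) * ρ x + (1 - (l : ℂ)) * σ' x)
    (ε : ℝ) (hε : 0 < ε) :
    ∃ c : X, (c : H →L[ℂ] H).IsPositive ∧ ρ c = 1 ∧ σ c ≤ (ε : ℂ) := by
  by_contra hno
  apply hsep
  -- Any `0 < δ ≤ ε` keeps `σ - δ ρ` positive; `δ < 1` is needed to normalise it.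
  obtain ⟨δ, hδ0, hδε, hδ1⟩ : ∃ δ : ℝ, 0 < δ ∧ δ ≤ ε ∧ δ < 1 :=
    ⟨min ε (1 / 2), lt_min hε (by norm_num), min_le_left _ _,
      (min_le_right _ _).trans_lt (by norm_num)⟩
  have hδ1' : (1 - (δ : ℂ)) ≠ 0 := by
    rw [sub_ne_zero]
    exact_mod_cast hδ1.ne'
  have key : ∀ x : X, (x : H →L[ℂ] H).IsPositive → 0 ≤ σ x - (δ : ℂ) * ρ x := by
    intro x hx
    obtain ⟨r, hr0, hr⟩ : ∃ t : ℝ, 0 ≤ t ∧ (t : ℂ) = ρ x :=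
      RCLike.nonneg_iff_exists_ofReal.mp (hρpos x hx)
    obtain ⟨s, hs0, hs⟩ : ∃ t : ℝ, 0 ≤ t ∧ (t : ℂ) = σ x :=
      RCLike.nonneg_iff_exists_ofReal.mp (hσpos x hx)
    rw [← hr, ← hs]
    norm_cast
    rcases hr0.eq_or_lt with h | h
    · rw [← h]; simpa using hs0
    · by_contra hlt
      apply hno
      have hrC : (r : ℂ) ≠ 0 := by exact_mod_cast h.ne'
      refine ⟨((r⁻¹ : ℝ) : ℂ) • x, ?_, ?_, ?_⟩
      · exact hx.smul_of_nonneg (by exact_mod_cast inv_nonneg.mpr hr0)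
      · rw [map_smul, ← hr]
        simp [hrC]
      · rw [map_smul, ← hs, smul_eq_mul]
        norm_cast
        rw [inv_mul_le_iff₀ h]
        nlinarith
  refine ⟨δ, (1 - (δ : ℂ))⁻¹ • (σ - (δ : ℂ) • ρ), hδ0, hδ1.le, ?_, ?_, ?_⟩
  · simp [hρ1, hσ1, hδ1']
  · intro x hx
    have h1 : (0 : ℂ) ≤ (1 - (δ : ℂ))⁻¹ := by
      have : (0 : ℝ) ≤ (1 - δ)⁻¹ := inv_nonneg.mpr (by linarith)
      exact_mod_cast this
    simpa using mul_nonneg h1 (key x hx)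
  · intro x
    simp only [LinearMap.smul_apply, LinearMap.sub_apply, smul_eq_mul]
    rw [mul_inv_cancel_left₀ hδ1']
    ring
end

section
/- Let A be a unital C*-algebra and a ∈ A a selfadjoint element with positive part a₊, i.e. a = a₊ − a₋ where a₊, a₋ ≥ 0 and a₊·a₋ = 0. Let S(a) be the set of all elements of the form λ·(c² − (1−λ)⁻¹·d²), where 0 ≤ λ < 1 and c, d ∈ A are positive elements which commute with each other and with a and satisfy c − d ≤ a. Then every element of S(a) is ≤ a₊², and for every ε > 0 there exists s ∈ S(a) with a₊² − ε·1 ≤ s; in particular a₊² is the least upper bound of S(a) in the selfadjoint part of A. -/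
/-!
Write `p = a₊`, `n = a₋`. Any `c, d` commuting with `a` commute with `p`, which is obtained from `a`
by functional calculus.

Upper bound: `c ≤ a + d ≤ p + d`, and all the elements commute, so `c² ≤ (p + d)²`; moreover
`p² + l (1 - l)⁻¹ d² - l (p + d)² = (1 - l) (p - l (1 - l)⁻¹ d)²` is positive.

Approximation: for `0 < l < 1` the choice `c = l⁻¹ p`, `d = (l⁻¹ - 1) p + n` has `c - d = a` and
yields the element `p² - l (1 - l)⁻¹ n²` of `S(a)`. With `δ = l (1 - l)⁻¹` small this is at least
`p² - ε`. The least upper bound property follows since the positive cone is closed.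
-/

/-- The set `S(a)` of elements `λ(c² − (1−λ)⁻¹ d²)` where `0 ≤ λ < 1` and `c, d` are
positive elements commuting with each other and with `a` such that `c − d ≤ a`. -/
def sqrSet {A : Type*} [CStarAlgebra A] [PartialOrder A] (a : A) : Set A :=
  {s : A | ∃ (l : ℝ) (c d : A), 0 ≤ l ∧ l < 1 ∧ 0 ≤ c ∧ 0 ≤ d ∧
    Commute c d ∧ Commute c a ∧ Commute d a ∧ c - d ≤ a ∧
    s = l • (c * c - (1 - l)⁻¹ • (d * d))}

/-- The upper bound for a single element of `S(a)`, after `c - d ≤ a` has been relaxed to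
`c ≤ p + d`. -/
lemma sqr_element_le {A : Type*} [CStarAlgebra A] [PartialOrder A] [StarOrderedRing A]
    {p c d : A} {l : ℝ} (hl0 : 0 ≤ l) (hl1 : l < 1) (hp : 0 ≤ p) (hc : 0 ≤ c) (hd : 0 ≤ d)
    (hcd : Commute c d) (hcp : Commute c p) (hdp : Commute d p) (hle : c ≤ p + d) :
    l • (c * c - (1 - l)⁻¹ • (d * d)) ≤ p * p := by
  have hm : 0 < 1 - l := sub_pos.2 hl1
  have hcpd : Commute c (p + d) := hcp.add_right hcd
  have h1 : 0 ≤ (p + d - c) * (p + d + c) := by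
    refine Commute.mul_nonneg (sub_nonneg.2 hle) (add_nonneg (add_nonneg hp hd) hc) ?_
    exact ((Commute.refl _).add_right hcpd.symm).sub_left (hcpd.add_right (Commute.refl c))
  have h2 : 0 ≤ (p - (l * (1 - l)⁻¹) • d) * (p - (l * (1 - l)⁻¹) • d) :=
    (hp.isSelfAdjoint.sub (IsSelfAdjoint.smul (IsSelfAdjoint.all _) hd.isSelfAdjoint)).mul_self_nonneg
  have h3 := add_nonneg (smul_nonneg hl0 h1) (smul_nonneg hm.le h2)
  rw [← sub_nonneg]
  convert h3 using 1
  simp only [mul_add, add_mul, mul_sub, sub_mul, smul_mul_assoc, mul_smul_comm, hcp.eq, hcd.eq,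
    hdp.eq]
  match_scalars <;> field_simp <;> ring

/-- For a selfadjoint element `a = a₊ − a₋` (with `a₊, a₋ ≥ 0`, `a₊a₋ = 0`) of a unital
C*-algebra, every member of `S(a)` is `≤ a₊²`, for every `ε > 0` some member of `S(a)` is
`≥ a₊² − ε·1`, and hence `a₊²` is the least upper bound of `S(a)` in the selfadjoint part.
-/
theorem statement18
    (A : Type*) [CStarAlgebra A] [PartialOrder A] [StarOrderedRing A]
    (a aPos aNeg : A)
    (hsum : a = aPos - aNeg) (hpos : 0 ≤ aPos) (hneg : 0 ≤ aNeg)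
    (horth : aPos * aNeg = 0) :
    (∀ s ∈ sqrSet a, s ≤ aPos * aPos) ∧
    (∀ ε : ℝ, 0 < ε → ∃ s ∈ sqrSet a, aPos * aPos - ε • (1 : A) ≤ s) ∧
    (∀ b : A, IsSelfAdjoint b → (∀ s ∈ sqrSet a, s ≤ b) → aPos * aPos ≤ b) := by
  have hnp : aNeg * aPos = 0 := by
    have := congrArg star horth
    simpa [hpos.isSelfAdjoint.star_eq, hneg.isSelfAdjoint.star_eq] using this
  have approx : ∀ ε : ℝ, 0 < ε → ∃ s ∈ sqrSet a, aPos * aPos - ε • (1 : A) ≤ s := by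
    intro ε hε
    set N : ℝ := ‖aNeg * aNeg‖ with hN
    have hN0 : 0 ≤ N := norm_nonneg _
    obtain ⟨δ, hδ, hδN⟩ : ∃ δ : ℝ, 0 < δ ∧ δ * N ≤ ε := by
      refine ⟨ε / (N + 1), by positivity, ?_⟩
      rw [div_mul_eq_mul_div, div_le_iff₀ (by positivity)]
      nlinarith
    have hcomm : Commute aPos aNeg := horth.trans hnp.symm
    have hcp : Commute aPos a := hsum ▸ (Commute.refl _).sub_right hcomm
    have hcn : Commute aNeg a := hsum ▸ hcomm.symm.sub_right (Commute.refl _)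
    refine ⟨aPos * aPos - δ • (aNeg * aNeg),
      -- `δ = l / (1 - l)`, so `l⁻¹ = 1 + δ⁻¹` and `(1 - l)⁻¹ = 1 + δ`
      ⟨δ / (1 + δ), (1 + δ⁻¹) • aPos, δ⁻¹ • aPos + aNeg, by positivity,
        (div_lt_one (by positivity)).2 (by linarith), smul_nonneg (by positivity) hpos,
        add_nonneg (smul_nonneg (by positivity) hpos) hneg, ?_, hcp.smul_left _,
        (hcp.smul_left _).add_left hcn, ?_, ?_⟩, ?_⟩
    · exact (((Commute.refl aPos).smul_right _).add_right hcomm).smul_left _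
    · rw [hsum]
      apply le_of_eq
      module
    · have hl : (1 - δ / (1 + δ))⁻¹ = 1 + δ := by
        field_simp
        ring
      rw [hl]
      simp only [mul_add, add_mul, smul_mul_assoc, mul_smul_comm, horth, hnp]
      match_scalars <;> field_simp <;> ring
    · have hself : IsSelfAdjoint (aNeg * aNeg) := by
        rw [isSelfAdjoint_iff, star_mul, hneg.isSelfAdjoint.star_eq]
      have h := hself.le_algebraMap_norm_self
      rw [Algebra.algebraMap_eq_smul_one] at h
      apply sub_le_sub_left
      calc δ • (aNeg * aNeg) ≤ δ • (N • (1 : A)) := smul_le_smul_of_nonneg_left h hδ.le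
        _ = (δ * N) • (1 : A) := smul_smul _ _ _
        _ ≤ ε • (1 : A) := smul_le_smul_of_nonneg_right hδN zero_le_one
  refine ⟨?_, approx, ?_⟩
  · rintro s ⟨l, c, d, hl0, hl1, hc, hd, hcd, hca, hda, hle, rfl⟩
    have hP : cfcₙ (fun x : ℝ => x⁺) a = aPos :=
      (CFC.posPart_negPart_unique hsum horth hpos hneg).1
    have hcp : Commute c aPos := hP ▸ (hca.symm.cfcₙ_real _).symm
    have hdp : Commute d aPos := hP ▸ (hda.symm.cfcₙ_real _).symm
    refine sqr_element_le hl0 hl1 hpos hc hd hcd hcp hdp ?_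
    have ha : a ≤ aPos := by
      rw [hsum]
      exact sub_le_self _ hneg
    exact (sub_le_iff_le_add.1 hle).trans (add_le_add_left ha d)
  · intro b _ hb
    have hlim : Filter.Tendsto (fun ε : ℝ => aPos * aPos - ε • (1 : A))
        (nhdsWithin 0 (Set.Ioi 0)) (nhds (aPos * aPos)) := by
      have hcont : Continuous (fun ε : ℝ => aPos * aPos - ε • (1 : A)) := by fun_prop
      simpa using (hcont.tendsto 0).mono_left nhdsWithin_le_nhds
    refine le_of_tendsto hlim ?_
    filter_upwards [self_mem_nhdsWithin] with ε hε
    obtain ⟨s, hs, hle⟩ := approx ε hε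
    exact hle.trans (hb s hs)
end
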